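/- There exist universal constants c > 0, C > 0 and n₀ such that for all n ≥ n₀, r ≥ 1, and k with n·r ≤ k ≤ n²: if a randomized t-round adaptive algorithm making k exact linear measurements per round is such that for every n×n real matrix A it outputs a matrix B of rank at most r satisfying ‖A − B‖ ≤ 2·σ_{r+1}(A) with probability at least 1 − n^{−C} (over the seed), then t ≥ c·log(n²/k). -/

import Mathlib

/-!
The lower bound already holds for planted inputs `G + (τ / √n) u vᵀ`, where `G` is a standard
Gaussian matrix, `u` and `v` are uniform sign vectors, and `τ` is a constant so large that the norm
`τ √n` of the plant exceeds `2 (1 + α) ‖G‖` with probability at least `3/4`. Here `α` is the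
approximation factor required of the algorithm.

Little is learned per round. The transcript on `a + θ`, with `a` Gaussian, has an explicit
likelihood ratio with respect to independent Gaussian responses, governed by the energy of `θ`
captured by the queries. Hence, while the captured energy is at most `s`, an event of prior
probability `δ` for each fixed transcript has probability about `exp s * δ` under the planted law.
For a fixed transcript the energy of `(τ / √n) u ⊗ v` exceeds a large multiple of `k / n` with
exponentially small prior probability, by a decoupled Hanson–Wright bound. Applied round after
round, these two facts show that the captured energy grows at most by a constant factor per round,
starting from `k / n`. With `x = n² / k`, as long as `t` is below a small multiple of `log x`, it
stays below `√x * k / n = n / √x`, a small multiple of `n`.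

A correct output reveals much. The plant has rank one, so the optimal error is at most `‖G‖`, and a
correct output `B` is within `(1 + α) ‖G‖ ≤ τ √n / 2` of the plant. Thus `|B v|` is within a
constant factor of its largest possible value `‖B‖ |v|`, while `rank B ≤ r` keeps `‖B‖_F²` of order
`r ‖B‖²`. A fixed such matrix is aligned in this way with a random sign vector with probability at
most `exp (r / 2 - n / 36)`. As `r ≤ k / n`, this is too small to be compensated by the captured
energy.

When `n² / k` is bounded, the claim reduces to `t ≥ 1`.
-/

open MeasureTheory ProbabilityTheory Matrix
open scoped ENNReal Classical

noncomputable section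

/-- Squared Euclidean norm of a finitely-indexed real vector. -/
def sqNorm {ι : Type*} [Fintype ι] (x : ι → ℝ) : ℝ := ∑ i, x i ^ 2

/-- Squared Frobenius norm of a real matrix. -/
def frobSq {m n : Type*} [Fintype m] [Fintype n] (A : Matrix m n ℝ) : ℝ :=
  ∑ i, ∑ j, A i j ^ 2

/-- Spectral (ℓ₂ operator) norm of a real matrix. -/
def specNorm {m n : Type*} [Fintype m] [Fintype n] (A : Matrix m n ℝ) : ℝ :=
  sSup ((fun x : n → ℝ => Real.sqrt (sqNorm (A.mulVec x))) '' {x | sqNorm x ≤ 1})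

/-- `i`-th largest singular value (1-based), characterized via
`σ_i(A) = min {‖A − X‖ : rank X ≤ i − 1}`. -/
def singVal {m n : Type*} [Fintype m] [Fintype n] (A : Matrix m n ℝ) (i : ℕ) : ℝ :=
  sInf {c | ∃ X : Matrix m n ℝ, X.rank ≤ i - 1 ∧ c = specNorm (A - X)}

/-- Flattening of an `n × n` matrix into a vector in `ℝ^{n²}`. -/
def vec (n : ℕ) (A : Matrix (Fin n) (Fin n) ℝ) : Fin (n * n) → ℝ :=
  fun i => A (finProdFinEquiv.symm i).1 (finProdFinEquiv.symm i).2

/-- `u ⊗ v = vec (u vᵀ) ∈ ℝ^{n²}`. -/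
def tensor {n : ℕ} (u v : Fin n → ℝ) : Fin (n * n) → ℝ :=
  vec n (Matrix.of fun i j => u i * v j)

/-- Standard Gaussian measure on `ι → ℝ`. -/
def stdGaussian (ι : Type*) [Fintype ι] : Measure (ι → ℝ) :=
  Measure.pi fun _ => gaussianReal 0 1

/-- Standard Gaussian measure on `n × n` matrices (as `Fin n → Fin n → ℝ`). -/
def stdGaussianMat (n : ℕ) : Measure (Fin n → Fin n → ℝ) :=
  Measure.pi fun _ => stdGaussian (Fin n)

/-- Query maps of a deterministic `t`-round adaptive algorithm making `k` linear
measurements per round on inputs in `ℝ^N`. -/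
def QueryMaps (N k t : ℕ) : Type :=
  (j : Fin t) → (Fin (j : ℕ) → (Fin k → ℝ)) → Matrix (Fin k) (Fin N) ℝ

namespace QueryMaps

variable {N k t : ℕ}

/-- Restriction of a round-`j` history to the first `i` rounds. -/
def prefixHist {j : Fin t} (h : Fin (j : ℕ) → Fin k → ℝ) {i : Fin t}
    (hij : (i : ℕ) < (j : ℕ)) : Fin (i : ℕ) → Fin k → ℝ :=
  fun l => h ⟨l.1, l.isLt.trans hij⟩

/-- Validity of query maps: measurability, orthonormal rows within each round, and
orthogonality across rounds along consistent histories. -/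
def Valid (Q : QueryMaps N k t) : Prop :=
  (∀ (j : Fin t) (i : Fin k) (l : Fin N), Measurable fun h => Q j h i l) ∧
  (∀ (j : Fin t) (h : Fin (j : ℕ) → Fin k → ℝ), Q j h * (Q j h)ᵀ = 1) ∧
  (∀ (j i : Fin t) (hij : (i : ℕ) < (j : ℕ)) (h : Fin (j : ℕ) → Fin k → ℝ),
      Q j h * (Q i (prefixHist h hij))ᵀ = 0)

/-- Responses of the algorithm under exact linear measurements of `a`. -/
def resp (Q : QueryMaps N k t) (a : Fin N → ℝ) (j : Fin t) : Fin k → ℝ :=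
  (Q j fun i => resp Q a ⟨i.1, i.isLt.trans j.isLt⟩).mulVec a
termination_by (j : ℕ)
decreasing_by exact i.isLt

/-- Responses of the algorithm under noisy linear measurements of `a`, with fresh
per-round noise `g`. -/
def nresp (Q : QueryMaps N k t) (a : Fin N → ℝ) (g : Fin t → Fin k → ℝ) (j : Fin t) :
    Fin k → ℝ :=
  ((Q j fun i => nresp Q a g ⟨i.1, i.isLt.trans j.isLt⟩).mulVec a) + g j
termination_by (j : ℕ)
decreasing_by exact i.isLt

/-- The `tk × N` matrix stacking all the query matrices realized along the run of the
algorithm on input `a` (exact measurements). -/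
def runMat (Q : QueryMaps N k t) (a : Fin N → ℝ) : Matrix (Fin t × Fin k) (Fin N) ℝ :=
  Matrix.of fun p l =>
    Q p.1 (fun i => resp Q a ⟨i.1, i.isLt.trans p.1.isLt⟩) p.2 l

end QueryMaps

/-- Kullback–Leibler divergence, valued in `[0, ∞]`, defined with the natural
logarithm. -/
def klDiv {Ω : Type*} [MeasurableSpace Ω] (P Q : Measure Ω) : ℝ≥0∞ :=
  if P ≪ Q ∧ Integrable (fun x => Real.log ((P.rnDeriv Q x).toReal)) P then
    ENNReal.ofReal (∫ x, Real.log ((P.rnDeriv Q x).toReal) ∂P)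
  else ⊤


/-- The rank-`r` plant `Σ_{i=1}^r uᵢ vᵢᵀ` built from the rows of `U` and `V`. -/
def plant {n r : ℕ} (U V : Fin r → Fin n → ℝ) : Matrix (Fin n) (Fin n) ℝ :=
  Matrix.of fun i j => ∑ l, U l i * V l j

/-- Schatten-`p` norm (real `p`), via the singular values. -/
def schattenNorm {n : ℕ} (p : ℝ) (A : Matrix (Fin n) (Fin n) ℝ) : ℝ :=
  (∑ i ∈ Finset.range n, singVal A (i + 1) ^ p) ^ (1 / p)

/-- Ky-Fan `p` norm: sum of the `p` largest singular values. -/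
def kyFanNorm {n : ℕ} (p : ℕ) (A : Matrix (Fin n) (Fin n) ℝ) : ℝ :=
  ∑ i ∈ Finset.range p, singVal A (i + 1)

local notation "γ" => (_root_.stdGaussian)

section EuclideanNorm

variable {ι : Type*} [Fintype ι]

lemma sqNorm_eq_dotProduct (x : ι → ℝ) : sqNorm x = x ⬝ᵥ x := by
  simp only [sqNorm, dotProduct, sq]

lemma sqNorm_nonneg (x : ι → ℝ) : 0 ≤ sqNorm x :=
  Finset.sum_nonneg fun i _ => sq_nonneg (x i)

lemma sqNorm_eq_norm_sq (x : ι → ℝ) : sqNorm x = ‖WithLp.toLp 2 x‖ ^ 2 := by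
  rw [EuclideanSpace.real_norm_sq_eq, sqNorm]

lemma sqNorm_smul (c : ℝ) (x : ι → ℝ) : sqNorm (c • x) = c ^ 2 * sqNorm x := by
  simp only [sqNorm, Pi.smul_apply, smul_eq_mul, mul_pow, Finset.mul_sum]

lemma sqNorm_add_add_sub (x y : ι → ℝ) :
    sqNorm (x + y) + sqNorm (x - y) = 2 * (sqNorm x + sqNorm y) := by
  simp only [sqNorm, Pi.add_apply, Pi.sub_apply, ← Finset.sum_add_distrib, Finset.mul_sum]
  exact Finset.sum_congr rfl fun i _ => by ring

lemma sqNorm_add_le (x y : ι → ℝ) : sqNorm (x + y) ≤ 2 * (sqNorm x + sqNorm y) := by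
  linarith [sqNorm_add_add_sub x y, sqNorm_nonneg (x - y)]

@[fun_prop]
lemma continuous_sqNorm : Continuous (sqNorm : (ι → ℝ) → ℝ) := by
  unfold sqNorm; fun_prop

@[fun_prop]
lemma measurable_sqNorm : Measurable (sqNorm : (ι → ℝ) → ℝ) :=
  continuous_sqNorm.measurable

end EuclideanNorm

section SpectralNorm

open scoped Matrix.Norms.L2Operator

variable {m n : Type*} [Fintype m] [Fintype n]

lemma specNorm_eq_l2_opNorm (A : Matrix m n ℝ) : specNorm A = ‖A‖ := by
  rw [Matrix.l2_opNorm_def, ← ContinuousLinearMap.sSup_unitClosedBall_eq_norm, specNorm]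
  congr 1
  ext c
  constructor
  · rintro ⟨x, hx, rfl⟩
    refine ⟨WithLp.toLp 2 x, ?_, ?_⟩
    · rw [mem_closedBall_zero_iff, ← sq_le_one_iff₀ (norm_nonneg _), ← sqNorm_eq_norm_sq]
      exact hx
    · simp only [sqNorm_eq_norm_sq, Real.sqrt_sq (norm_nonneg _)]
      rfl
  · rintro ⟨x, hx, rfl⟩
    refine ⟨x.ofLp, ?_, ?_⟩
    · rw [mem_closedBall_zero_iff, ← sq_le_one_iff₀ (norm_nonneg _)] at hx
      rwa [Set.mem_ofPred_eq, sqNorm_eq_norm_sq]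
    · simp only [sqNorm_eq_norm_sq, Real.sqrt_sq (norm_nonneg _)]
      rfl

lemma specNorm_nonneg (A : Matrix m n ℝ) : 0 ≤ specNorm A := by
  rw [specNorm_eq_l2_opNorm]
  exact norm_nonneg A

lemma sqNorm_mulVec_le (A : Matrix m n ℝ) (x : n → ℝ) :
    sqNorm (A *ᵥ x) ≤ specNorm A ^ 2 * sqNorm x := by
  rw [sqNorm_eq_norm_sq, sqNorm_eq_norm_sq, ← mul_pow, specNorm_eq_l2_opNorm]
  gcongr
  exact Matrix.l2_opNorm_mulVec A (WithLp.toLp 2 x)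

lemma specNorm_sq_le {A : Matrix m n ℝ} {b : ℝ} (hb : 0 ≤ b)
    (h : ∀ x, sqNorm (A *ᵥ x) ≤ b * sqNorm x) : specNorm A ^ 2 ≤ b := by
  rw [specNorm_eq_l2_opNorm, Matrix.l2_opNorm_def, ← Real.sq_sqrt hb]
  gcongr
  refine ContinuousLinearMap.opNorm_le_bound _ (Real.sqrt_nonneg b) fun x => ?_
  rw [← sq_le_sq₀ (norm_nonneg _) (by positivity), mul_pow, Real.sq_sqrt hb]
  simpa only [sqNorm_eq_norm_sq] using! h x.ofLp

lemma specNorm_transpose (A : Matrix m n ℝ) : specNorm Aᵀ = specNorm A := by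
  rw [specNorm_eq_l2_opNorm, specNorm_eq_l2_opNorm, ← Matrix.l2_opNorm_conjTranspose A,
    conjTranspose_eq_transpose_of_trivial]

lemma specNorm_add_le (A B : Matrix m n ℝ) : specNorm (A + B) ≤ specNorm A + specNorm B := by
  simp only [specNorm_eq_l2_opNorm]
  exact norm_add_le A B

lemma specNorm_eq_zero {A : Matrix m n ℝ} : specNorm A = 0 ↔ A = 0 := by
  rw [specNorm_eq_l2_opNorm, norm_eq_zero]

lemma specNorm_sub_rev (A B : Matrix m n ℝ) : specNorm (A - B) = specNorm (B - A) := by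
  simp only [specNorm_eq_l2_opNorm]
  exact norm_sub_rev A B

lemma continuous_specNorm : Continuous (specNorm : Matrix m n ℝ → ℝ) := by
  simp only [funext specNorm_eq_l2_opNorm]
  exact continuous_norm

lemma measurable_specNorm_comp {X : Type*} [MeasurableSpace X] {f : X → Matrix m n ℝ}
    (hf : ∀ i j, Measurable fun x => f x i j) : Measurable fun x => specNorm (f x) :=
  (show Continuous fun B : m → n → ℝ => specNorm (of B) from continuous_specNorm).measurable.comp
    (measurable_pi_lambda _ fun i => measurable_pi_lambda _ (hf i))

lemma specNorm_le_one_of_mul_transpose [DecidableEq m] {A : Matrix m n ℝ} (hA : A * Aᵀ = 1) :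
    specNorm A ≤ 1 := by
  have h : ‖A‖ * ‖A‖ ≤ 1 := by
    rw [← Matrix.l2_opNorm_conjTranspose A, ← Matrix.l2_opNorm_conjTranspose_mul_self,
      conjTranspose_conjTranspose, conjTranspose_eq_transpose_of_trivial, hA,
      ← Matrix.diagonal_one, Matrix.l2_opNorm_diagonal]
    exact (pi_norm_le_iff_of_nonneg zero_le_one).2 fun _ => norm_one.le
  rw [specNorm_eq_l2_opNorm]
  nlinarith [norm_nonneg A]

end SpectralNorm

section SingularValues

lemma isHermitian_gram {m n : Type*} [Fintype m] (A : Matrix m n ℝ) : (Aᵀ * A).IsHermitian :=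
  isHermitian_conjTranspose_mul_self A

variable {m n : Type*} [Fintype m] [Fintype n]

lemma frobSq_eq_trace (A : Matrix m n ℝ) : frobSq A = (Aᵀ * A).trace := by
  simp only [frobSq, trace, diag, mul_apply, transpose_apply, sq]
  exact Finset.sum_comm

lemma frobSq_transpose (A : Matrix m n ℝ) : frobSq Aᵀ = frobSq A :=
  Finset.sum_comm

lemma frobSq_of_mul_transpose [DecidableEq m] {A : Matrix m n ℝ} (hA : A * Aᵀ = 1) :
    frobSq A = Fintype.card m := by
  rw [← frobSq_transpose, frobSq_eq_trace, transpose_transpose, hA, trace_one]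

lemma sqNorm_mulVec_eq_dotProduct (A : Matrix m n ℝ) (x : n → ℝ) :
    sqNorm (A *ᵥ x) = x ⬝ᵥ (Aᵀ * A) *ᵥ x := by
  rw [sqNorm_eq_dotProduct, dotProduct_mulVec, vecMul_mulVec, ← dotProduct_mulVec]

/-- The squared singular values of `A`, indexed by its columns: the eigenvalues of `AᵀA`. -/
def sqSingularValue (A : Matrix m n ℝ) : n → ℝ :=
  (isHermitian_gram A).eigenvalues

/-- The orthogonal matrix whose rows are the right singular vectors of `A`. -/
def rightSingularMatrix (A : Matrix m n ℝ) : Matrix n n ℝ :=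
  star ((isHermitian_gram A).eigenvectorUnitary : Matrix n n ℝ)

lemma rightSingularMatrix_mul_transpose (A : Matrix m n ℝ) :
    rightSingularMatrix A * (rightSingularMatrix A)ᵀ = 1 := by
  simp only [rightSingularMatrix, star_eq_conjTranspose, conjTranspose_eq_transpose_of_trivial,
    transpose_transpose]
  exact Unitary.coe_star_mul_self (isHermitian_gram A).eigenvectorUnitary

lemma sqNorm_mulVec_eq_sum (A : Matrix m n ℝ) (x : n → ℝ) :
    sqNorm (A *ᵥ x) = ∑ i, sqSingularValue A i * (rightSingularMatrix A *ᵥ x) i ^ 2 := by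
  have hU : x ᵥ* ((isHermitian_gram A).eigenvectorUnitary : Matrix n n ℝ) =
      rightSingularMatrix A *ᵥ x := (mulVec_transpose _ x).symm
  rw [sqNorm_mulVec_eq_dotProduct]
  conv_lhs => rw [(isHermitian_gram A).spectral_theorem, Unitary.conjStarAlgAut_apply]
  rw [← mulVec_mulVec, ← mulVec_mulVec, dotProduct_mulVec, hU]
  simp only [dotProduct, mulVec_diagonal]
  refine Finset.sum_congr rfl fun i _ => ?_
  change _ * (sqSingularValue A i * (rightSingularMatrix A *ᵥ x) i) = _
  ring

lemma sum_sqSingularValue (A : Matrix m n ℝ) : ∑ i, sqSingularValue A i = frobSq A := by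
  rw [frobSq_eq_trace, (isHermitian_gram A).trace_eq_sum_eigenvalues]
  rfl

lemma card_sqSingularValue_ne_zero (A : Matrix m n ℝ) :
    Fintype.card {i // sqSingularValue A i ≠ 0} = A.rank := by
  rw [← rank_transpose_mul_self A, (isHermitian_gram A).rank_eq_card_non_zero_eigs]
  rfl

lemma sqSingularValue_eq_sqNorm (A : Matrix m n ℝ) (i : n) :
    sqSingularValue A i = sqNorm (A *ᵥ (isHermitian_gram A).eigenvectorBasis i) := by
  rw [sqNorm_mulVec_eq_dotProduct]
  exact (isHermitian_gram A).eigenvalues_eq i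

lemma sqSingularValue_nonneg (A : Matrix m n ℝ) (i : n) : 0 ≤ sqSingularValue A i := by
  rw [sqSingularValue_eq_sqNorm]
  exact sqNorm_nonneg _

lemma sqSingularValue_le (A : Matrix m n ℝ) (i : n) : sqSingularValue A i ≤ specNorm A ^ 2 := by
  have hunit : sqNorm ((isHermitian_gram A).eigenvectorBasis i) = 1 := by
    rw [sqNorm_eq_norm_sq, WithLp.toLp_ofLp, OrthonormalBasis.norm_eq_one, one_pow]
  rw [sqSingularValue_eq_sqNorm]
  exact (sqNorm_mulVec_le A _).trans_eq (by rw [hunit, mul_one])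

lemma frobSq_le_rank_mul (A : Matrix m n ℝ) : frobSq A ≤ A.rank * specNorm A ^ 2 := by
  rw [← sum_sqSingularValue, ← Finset.sum_filter_ne_zero, ← card_sqSingularValue_ne_zero,
    Fintype.card_subtype, ← nsmul_eq_mul]
  exact Finset.sum_le_card_nsmul _ _ _ fun i _ => sqSingularValue_le A i

end SingularValues

section ExtendedExponential

/-- The real exponential with values in `[0, ∞]`, the form in which it enters Lebesgue
integrals. -/
def eexp (x : ℝ) : ℝ≥0∞ := ENNReal.ofReal (Real.exp x)

@[simp]
lemma eexp_zero : eexp 0 = 1 := by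
  rw [eexp, Real.exp_zero, ENNReal.ofReal_one]

lemma eexp_add (x y : ℝ) : eexp (x + y) = eexp x * eexp y := by
  rw [eexp, Real.exp_add, ENNReal.ofReal_mul (Real.exp_pos x).le, eexp, eexp]

lemma eexp_sum {ι : Type*} (s : Finset ι) (f : ι → ℝ) :
    eexp (∑ i ∈ s, f i) = ∏ i ∈ s, eexp (f i) := by
  rw [eexp, Real.exp_sum, ENNReal.ofReal_prod_of_nonneg fun i _ => (Real.exp_pos _).le]
  rfl

@[gcongr]
lemma eexp_le_eexp {x y : ℝ} (h : x ≤ y) : eexp x ≤ eexp y :=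
  ENNReal.ofReal_le_ofReal (Real.exp_le_exp.2 h)

lemma eexp_pos (x : ℝ) : 0 < eexp x := ENNReal.ofReal_pos.2 (Real.exp_pos x)

lemma eexp_ne_top (x : ℝ) : eexp x ≠ ∞ := ENNReal.ofReal_ne_top

lemma ofReal_add_one_le_eexp (x : ℝ) : ENNReal.ofReal (x + 1) ≤ eexp x :=
  ENNReal.ofReal_le_ofReal (Real.add_one_le_exp x)

lemma eexp_neg_inv_lt {x : ℝ} (hx : 0 < x) : eexp (-x⁻¹) < ENNReal.ofReal x := by
  rw [eexp, Real.exp_neg, ENNReal.ofReal_lt_ofReal_iff hx]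
  exact inv_lt_of_inv_lt₀ hx (by linarith [Real.add_one_le_exp x⁻¹])

lemma eexp_mul_eexp_neg (x : ℝ) : eexp x * eexp (-x) = 1 := by
  rw [← eexp_add, add_neg_cancel, eexp_zero]

@[fun_prop]
lemma measurable_eexp : Measurable eexp := by
  unfold eexp; fun_prop

lemma measure_le_le_lintegral_eexp {Ω : Type*} [MeasurableSpace Ω] (μ : Measure Ω) {f : Ω → ℝ}
    (hf : Measurable f) (a : ℝ) : μ {x | a ≤ f x} ≤ eexp (-a) * ∫⁻ x, eexp (f x) ∂μ := by
  have hmarkov : eexp a * μ {x | a ≤ f x} ≤ ∫⁻ x, eexp (f x) ∂μ :=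
    (mul_le_mul_right (measure_mono fun x => eexp_le_eexp) _).trans
      (mul_meas_ge_le_lintegral (by fun_prop) (eexp a))
  calc μ {x | a ≤ f x} = eexp (-a) * (eexp a * μ {x | a ≤ f x}) := by
        rw [← mul_assoc, mul_comm (eexp (-a)), eexp_mul_eexp_neg, one_mul]
    _ ≤ _ := by gcongr

end ExtendedExponential

section GaussianMeasure

variable {ι κ : Type*} [Fintype ι] [Fintype κ]

instance : IsProbabilityMeasure (γ ι) :=
  inferInstanceAs (IsProbabilityMeasure (Measure.pi fun _ : ι => gaussianReal 0 1))

lemma lintegral_pi_prod_eq {X : ι → Type*} [∀ i, MeasurableSpace (X i)] (μ : ∀ i, Measure (X i))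
    [∀ i, IsProbabilityMeasure (μ i)] {f : ∀ i, X i → ℝ≥0∞} (hf : ∀ i, Measurable (f i)) :
    ∫⁻ x, ∏ i, f i (x i) ∂(Measure.pi μ) = ∏ i, ∫⁻ x, f i x ∂(μ i) := by
  have hind : iIndepFun (fun i (x : ∀ i, X i) => f i (x i)) (Measure.pi μ) :=
    iIndepFun_pi fun i => (hf i).aemeasurable
  rw [lintegral_prod_eq_prod_lintegral_of_indepFun Finset.univ
    (fun i (x : ∀ i, X i) => f i (x i)) hind fun i => (hf i).comp (measurable_pi_apply i)]
  exact Finset.prod_congr rfl fun i _ => (measurePreserving_eval μ i).lintegral_comp (hf i)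

lemma gaussianReal_eq_withDensity (c : ℝ) :
    gaussianReal c 1 = (gaussianReal 0 1).withDensity fun x => eexp (x * c - c ^ 2 / 2) := by
  rw [gaussianReal_of_var_ne_zero _ one_ne_zero, gaussianReal_of_var_ne_zero _ one_ne_zero,
    ← withDensity_mul _ (by fun_prop) (by fun_prop)]
  congr 1
  ext x
  simp only [Pi.mul_apply, gaussianPDF, eexp]
  rw [← ENNReal.ofReal_mul (gaussianPDFReal_nonneg _ _ _), gaussianPDFReal, gaussianPDFReal,
    mul_assoc _ (Real.exp _), ← Real.exp_add]
  congr 3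
  simp only [NNReal.coe_one]
  ring

lemma map_add_stdGaussian (c : ι → ℝ) :
    (γ ι).map (· + c) = (γ ι).withDensity fun x => eexp (x ⬝ᵥ c - sqNorm c / 2) := by
  have hmap : (γ ι).map (· + c) = Measure.pi fun i => gaussianReal (c i) 1 := by
    have := Measure.pi_map_pi (μ := fun _ : ι => gaussianReal 0 1)
      (f := fun i x => x + c i) fun i => by fun_prop
    simp only [gaussianReal_map_add_const, zero_add] at this
    exact this
  have hdensity (x : ι → ℝ) :
      eexp (x ⬝ᵥ c - sqNorm c / 2) = ∏ i, eexp (x i * c i - c i ^ 2 / 2) := by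
    rw [← eexp_sum, Finset.sum_sub_distrib, ← Finset.sum_div]
    rfl
  rw [hmap]
  refine Measure.pi_eq fun s hs => ?_
  rw [withDensity_apply _ (.univ_pi hs), ← lintegral_indicator (.univ_pi hs)]
  calc _ = ∫⁻ x, ∏ i, (s i).indicator (fun y => eexp (y * c i - c i ^ 2 / 2)) (x i) ∂(γ ι) := by
        refine lintegral_congr fun x => ?_
        by_cases hx : x ∈ Set.univ.pi s
        · rw [Set.indicator_of_mem hx, hdensity]
          exact Finset.prod_congr rfl fun i _ =>
            (Set.indicator_of_mem (hx i trivial) fun y => eexp (y * c i - c i ^ 2 / 2)).symm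
        · obtain ⟨i, hi⟩ : ∃ i, x i ∉ s i := by simpa [Set.mem_pi] using hx
          rw [Set.indicator_of_notMem hx]
          exact (Finset.prod_eq_zero (Finset.mem_univ i) (Set.indicator_of_notMem hi _)).symm
    _ = ∏ i, gaussianReal (c i) 1 (s i) := by
        rw [_root_.stdGaussian, lintegral_pi_prod_eq _ fun i => .indicator (by fun_prop) (hs i)]
        refine Finset.prod_congr rfl fun i _ => ?_
        rw [lintegral_indicator (hs i), gaussianReal_eq_withDensity (c i),
          withDensity_apply _ (hs i)]

@[fun_prop]
lemma measurable_dotProduct {X : Type*} [MeasurableSpace X] {f g : X → ι → ℝ}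
    (hf : Measurable f) (hg : Measurable g) : Measurable fun x => f x ⬝ᵥ g x := by
  unfold dotProduct; fun_prop

lemma lintegral_add_stdGaussian (c : ι → ℝ) {f : (ι → ℝ) → ℝ≥0∞} (hf : Measurable f) :
    ∫⁻ x, f (x + c) ∂(γ ι) = ∫⁻ x, eexp (x ⬝ᵥ c - sqNorm c / 2) * f x ∂(γ ι) := by
  rw [← lintegral_map hf (by fun_prop : Measurable (· + c)), map_add_stdGaussian,
    lintegral_withDensity_eq_lintegral_mul _ (by fun_prop) hf]
  rfl

lemma lintegral_eexp_dotProduct_stdGaussian (c : ι → ℝ) :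
    ∫⁻ x, eexp (x ⬝ᵥ c) ∂(γ ι) = eexp (sqNorm c / 2) := by
  have h := lintegral_add_stdGaussian c (f := fun _ => eexp (sqNorm c / 2)) measurable_const
  simp only [lintegral_const, measure_univ, mul_one, ← eexp_add, sub_add_cancel] at h
  exact h.symm

lemma charFun_map_toLp_stdGaussian (s : EuclideanSpace ℝ ι) :
    charFun ((γ ι).map (WithLp.toLp 2)) s = Complex.exp (-‖s‖ ^ 2 / 2) := by
  rw [← charFun_stdGaussian, ← map_pi_eq_stdGaussian]
  rfl

lemma measurePreserving_mulVec_stdGaussian [DecidableEq κ] {M : Matrix κ ι ℝ}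
    (hM : M * Mᵀ = 1) : MeasurePreserving (M *ᵥ ·) (γ ι) (γ κ) := by
  refine ⟨by fun_prop, (MeasurableEquiv.toLp 2 (κ → ℝ)).map_measurableEquiv_injective ?_⟩
  refine Measure.ext_of_charFun (E := EuclideanSpace ℝ κ) (funext fun s => ?_)
  have hinner (x : ι → ℝ) : inner ℝ (WithLp.toLp 2 (M *ᵥ x)) s =
      inner ℝ (WithLp.toLp 2 x) (WithLp.toLp 2 (Mᵀ *ᵥ s.ofLp)) := by
    simp only [EuclideanSpace.inner_eq_star_dotProduct, star_trivial, dotProduct_mulVec,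
      mulVec_transpose]
  have hnorm : ‖WithLp.toLp 2 (Mᵀ *ᵥ s.ofLp)‖ ^ 2 = ‖s‖ ^ 2 := by
    rw [← sqNorm_eq_norm_sq, sqNorm_mulVec_eq_dotProduct, transpose_transpose, hM, one_mulVec,
      ← sqNorm_eq_dotProduct, sqNorm_eq_norm_sq]
  calc charFun (((γ ι).map (M *ᵥ ·)).map (WithLp.toLp 2)) s
      = charFun ((γ ι).map (WithLp.toLp 2)) (WithLp.toLp 2 (Mᵀ *ᵥ s.ofLp)) := by
        rw [Measure.map_map (by fun_prop) (by fun_prop), charFun_apply, charFun_apply,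
          integral_map (by fun_prop) (by fun_prop), integral_map (by fun_prop) (by fun_prop)]
        simp only [Function.comp_apply, hinner]
    _ = charFun ((γ κ).map (WithLp.toLp 2)) s := by
        simp only [charFun_map_toLp_stdGaussian, ← Complex.ofReal_pow, hnorm]

/-- The vector with image `z.2` under `Q` and the component of `z.1` orthogonal to the rows of `Q`,
when these rows are orthonormal. -/
def resample (Q : Matrix κ ι ℝ) (z : (ι → ℝ) × (κ → ℝ)) : ι → ℝ :=
  z.1 - Qᵀ *ᵥ (Q *ᵥ z.1) + Qᵀ *ᵥ z.2

lemma mulVec_resample [DecidableEq κ] {Q : Matrix κ ι ℝ} (hQ : Q * Qᵀ = 1)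
    (z : (ι → ℝ) × (κ → ℝ)) : Q *ᵥ resample Q z = z.2 := by
  rw [resample, mulVec_add, mulVec_sub, mulVec_mulVec _ Q Qᵀ, mulVec_mulVec _ Q Qᵀ, hQ,
    one_mulVec, one_mulVec, sub_self, zero_add]

lemma measurePreserving_resample [DecidableEq κ] {Q : Matrix κ ι ℝ} (hQ : Q * Qᵀ = 1) :
    MeasurePreserving (resample Q) ((γ ι).prod (γ κ)) (γ ι) := by
  have hidem : (Qᵀ * Q) * (Qᵀ * Q) = Qᵀ * Q := by
    rw [Matrix.mul_assoc, ← Matrix.mul_assoc Q, hQ, Matrix.one_mul]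
  have hproj : (1 - Qᵀ * Q) * (1 - Qᵀ * Q)ᵀ + Qᵀ * Q = 1 := by
    rw [transpose_sub, transpose_mul, transpose_transpose, transpose_one]
    noncomm_ring
    rw [hidem]
    abel
  have horth : fromCols (1 - Qᵀ * Q) Qᵀ * (fromCols (1 - Qᵀ * Q) Qᵀ)ᵀ = 1 := by
    rw [transpose_fromCols, fromCols_mul_fromRows, transpose_transpose, hproj]
  have hsum := measurePreserving_sumPiEquivProdPi_symm fun _ : ι ⊕ κ => gaussianReal 0 1
  convert! (measurePreserving_mulVec_stdGaussian horth).comp hsum using 1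
  ext z i
  simp only [resample, Function.comp_apply, fromCols_mulVec, sub_mulVec, one_mulVec,
    mulVec_mulVec]
  rfl

lemma lintegral_eexp_mul_sq_gaussianReal {a : ℝ} (ha₀ : 0 ≤ a) (ha : a ≤ 1 / 4) :
    ∫⁻ x, eexp (a * x ^ 2) ∂(gaussianReal 0 1) ≤ eexp (2 * a) := by
  rw [gaussianReal_of_var_ne_zero _ one_ne_zero,
    lintegral_withDensity_eq_lintegral_mul _ (by fun_prop) (by fun_prop)]
  have hdensity (x : ℝ) : (gaussianPDF 0 1 * fun x => eexp (a * x ^ 2)) x =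
      ENNReal.ofReal ((√(2 * Real.pi))⁻¹ * Real.exp (-(1 / 2 - a) * x ^ 2)) := by
    simp only [Pi.mul_apply, gaussianPDF, eexp]
    rw [← ENNReal.ofReal_mul (gaussianPDFReal_nonneg _ _ _), gaussianPDFReal,
      mul_assoc _ (Real.exp _), ← Real.exp_add]
    congr 3
    · simp only [NNReal.coe_one, mul_one]
    · simp only [NNReal.coe_one]; ring
  have hvalue : (2 * Real.pi)⁻¹ * (Real.pi / (1 / 2 - a)) = 1 / (1 - 2 * a) := by
    have : 1 - 2 * a ≠ 0 := by linarith
    field_simp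
  have hnumeric : 1 / (1 - 2 * a) ≤ Real.exp (2 * a) ^ 2 := by
    have := Real.add_one_le_exp (2 * (2 * a))
    rw [← Real.exp_nat_mul, Nat.cast_two, div_le_iff₀ (by linarith)]
    nlinarith
  simp_rw [hdensity]
  rw [← ofReal_integral_eq_lintegral_ofReal
    ((integrable_exp_neg_mul_sq (by linarith)).const_mul _) (.of_forall fun x => by positivity)]
  refine ENNReal.ofReal_le_ofReal ?_
  rw [integral_const_mul, integral_gaussian, ← Real.sqrt_inv, ← Real.sqrt_mul (by positivity),
    hvalue]
  exact Real.sqrt_le_iff.2 ⟨(Real.exp_pos _).le, hnumeric⟩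

lemma lintegral_eexp_sqNorm_mulVec_stdGaussian (B : Matrix κ ι ℝ) {l : ℝ} (hl₀ : 0 ≤ l)
    (hl : l * specNorm B ^ 2 ≤ 1 / 4) :
    ∫⁻ x, eexp (l * sqNorm (B *ᵥ x)) ∂(γ ι) ≤ eexp (2 * l * frobSq B) := by
  let w := sqSingularValue B
  have hsplit (x : ι → ℝ) : eexp (l * sqNorm (B *ᵥ x)) =
      ∏ i, eexp (l * w i * (rightSingularMatrix B *ᵥ x) i ^ 2) := by
    rw [← eexp_sum, sqNorm_mulVec_eq_sum, Finset.mul_sum]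
    simp only [mul_assoc, w]
  have hw (i : ι) : l * w i ≤ 1 / 4 :=
    (mul_le_mul_of_nonneg_left (sqSingularValue_le B i) hl₀).trans hl
  calc ∫⁻ x, eexp (l * sqNorm (B *ᵥ x)) ∂(γ ι)
      = ∫⁻ y, ∏ i, eexp (l * w i * y i ^ 2) ∂(γ ι) := by
        simp_rw [hsplit]
        exact (measurePreserving_mulVec_stdGaussian
          (rightSingularMatrix_mul_transpose B)).lintegral_comp
          (f := fun y : ι → ℝ => ∏ i, eexp (l * w i * y i ^ 2)) (by fun_prop)
    _ = ∏ i, ∫⁻ y, eexp (l * w i * y ^ 2) ∂(gaussianReal 0 1) :=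
        lintegral_pi_prod_eq _ (f := fun i y => eexp (l * w i * y ^ 2)) fun i => by fun_prop
    _ ≤ ∏ i, eexp (2 * (l * w i)) := Finset.prod_le_prod' fun i _ =>
        lintegral_eexp_mul_sq_gaussianReal (mul_nonneg hl₀ (sqSingularValue_nonneg B i)) (hw i)
    _ = eexp (2 * l * frobSq B) := by
        rw [← eexp_sum, ← sum_sqSingularValue, Finset.mul_sum]
        simp only [mul_assoc, w]

end GaussianMeasure

section Rademacher

/-- The distribution of a uniformly random sign. -/
def rademacher : Measure ℝ := (2 : ℝ≥0∞)⁻¹ • (Measure.dirac 1 + Measure.dirac (-1))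

/-- The distribution of a vector of independent uniformly random signs. -/
def signs (ι : Type*) [Fintype ι] : Measure (ι → ℝ) := Measure.pi fun _ => rademacher

instance : IsProbabilityMeasure rademacher :=
  ⟨by simp [rademacher, ENNReal.inv_two_add_inv_two]⟩

instance (ι : Type*) [Fintype ι] : IsProbabilityMeasure (signs ι) :=
  inferInstanceAs (IsProbabilityMeasure (Measure.pi fun _ : ι => rademacher))

lemma lintegral_rademacher (f : ℝ → ℝ≥0∞) :
    ∫⁻ x, f x ∂rademacher = 2⁻¹ * (f 1 + f (-1)) := by
  rw [rademacher, lintegral_smul_measure, lintegral_add_measure, lintegral_dirac, lintegral_dirac,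
    smul_eq_mul]

lemma sq_eq_one_ae_rademacher : ∀ᵐ x ∂rademacher, x ^ 2 = 1 := by
  simp [ae_iff, rademacher]

lemma lintegral_eexp_mul_rademacher_le (c : ℝ) :
    ∫⁻ x, eexp (x * c) ∂rademacher ≤ eexp (c ^ 2 / 2) := by
  rw [lintegral_rademacher, one_mul, neg_one_mul, eexp, eexp,
    ← ENNReal.ofReal_add (Real.exp_pos _).le (Real.exp_pos _).le, ← ENNReal.ofReal_ofNat,
    ← ENNReal.ofReal_inv_of_pos two_pos, ← ENNReal.ofReal_mul (by norm_num), inv_mul_eq_div,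
    ← Real.cosh_eq]
  exact ENNReal.ofReal_le_ofReal (Real.cosh_le_exp_half_sq c)

variable {ι : Type*} [Fintype ι]

lemma sqNorm_eq_card_ae_signs : ∀ᵐ x ∂(signs ι), sqNorm x = Fintype.card ι := by
  have hcoord (i : ι) : ∀ᵐ x ∂(signs ι), x i ^ 2 = 1 :=
    (measurePreserving_eval (fun _ : ι => rademacher) i).quasiMeasurePreserving.ae
      sq_eq_one_ae_rademacher
  filter_upwards [ae_all_iff.2 hcoord] with x hx
  simp [sqNorm, hx]

/-- A measure on `ι → ℝ` is subgaussian if its moment generating function is at most the one of the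
standard Gaussian measure. -/
def IsSubgaussian (μ : Measure (ι → ℝ)) : Prop :=
  ∀ y, ∫⁻ x, eexp (x ⬝ᵥ y) ∂μ ≤ eexp (sqNorm y / 2)

lemma isSubgaussian_signs : IsSubgaussian (signs ι) := fun y =>
  calc ∫⁻ x, eexp (x ⬝ᵥ y) ∂(signs ι)
      = ∏ i, ∫⁻ x, eexp (x * y i) ∂rademacher := by
        simp only [dotProduct, eexp_sum]
        exact lintegral_pi_prod_eq _ (f := fun i x => eexp (x * y i)) fun i => by fun_prop
    _ ≤ ∏ i, eexp (y i ^ 2 / 2) :=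
        Finset.prod_le_prod' fun i _ => lintegral_eexp_mul_rademacher_le (y i)
    _ = eexp (sqNorm y / 2) := by rw [← eexp_sum, ← Finset.sum_div, sqNorm]

end Rademacher

section QuadraticForms

variable {ι ι' κ : Type*} [Fintype ι] [Fintype ι']

lemma sqNorm_uncurry_vecMulVec (u : ι → ℝ) (v : ι' → ℝ) :
    sqNorm (Function.uncurry (vecMulVec u v)) = sqNorm u * sqNorm v := by
  simp only [sqNorm, Fintype.sum_prod_type, Finset.sum_mul_sum, ← mul_pow]
  rfl

/-- The matrix `∑ⱼ M_{p,(i,j)} vⱼ`, which acts on `u` as `M` acts on `u ⊗ v`. -/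
def contract (M : Matrix κ (ι × ι') ℝ) (v : ι' → ℝ) : Matrix κ ι ℝ :=
  of fun p i => ∑ j, M p (i, j) * v j

/-- The matrix `M` with one of its two column indices moved to the rows. -/
def unfolding (M : Matrix κ (ι × ι') ℝ) : Matrix (κ × ι) ι' ℝ :=
  of fun p j => M p.1 (p.2, j)

lemma contract_mulVec (M : Matrix κ (ι × ι') ℝ) (u : ι → ℝ) (v : ι' → ℝ) :
    contract M v *ᵥ u = M *ᵥ Function.uncurry (vecMulVec u v) := by
  ext p
  simp only [contract, mulVec, dotProduct, of_apply, Fintype.sum_prod_type, Finset.sum_mul]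
  refine Finset.sum_congr rfl fun i _ => Finset.sum_congr rfl fun j _ => ?_
  rw [mul_assoc, mul_comm (v j)]
  rfl

variable [Fintype κ]

lemma IsSubgaussian.lintegral_eexp_sqNorm_mulVec_le {μ : Measure (ι → ℝ)} [SFinite μ]
    (hμ : IsSubgaussian μ) (B : Matrix κ ι ℝ) {l : ℝ} (hl₀ : 0 ≤ l)
    (hl : l * specNorm B ^ 2 ≤ 1 / 4) :
    ∫⁻ x, eexp (l * sqNorm (B *ᵥ x)) ∂μ ≤ eexp (2 * l * frobSq B) := by
  let c := √(2 * l)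
  have hc : c ^ 2 = 2 * l := Real.sq_sqrt (by positivity)
  have hdual (x : ι → ℝ) (y : κ → ℝ) : y ⬝ᵥ c • B *ᵥ x = x ⬝ᵥ c • Bᵀ *ᵥ y := by
    rw [dotProduct_smul, dotProduct_smul, dotProduct_mulVec, mulVec_transpose, dotProduct_comm]
  calc ∫⁻ x, eexp (l * sqNorm (B *ᵥ x)) ∂μ
      = ∫⁻ x, ∫⁻ y, eexp (y ⬝ᵥ c • B *ᵥ x) ∂(γ κ) ∂μ := by
        refine lintegral_congr fun x => ?_
        rw [lintegral_eexp_dotProduct_stdGaussian, sqNorm_smul, hc]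
        ring_nf
    _ = ∫⁻ y, ∫⁻ x, eexp (x ⬝ᵥ c • Bᵀ *ᵥ y) ∂μ ∂(γ κ) := by
        simp only [hdual]
        refine lintegral_lintegral_swap (Measurable.aemeasurable ?_)
        fun_prop
    _ ≤ ∫⁻ y, eexp (l * sqNorm (Bᵀ *ᵥ y)) ∂(γ κ) := by
        refine lintegral_mono fun y => (hμ _).trans_eq ?_
        rw [sqNorm_smul, hc]
        ring_nf
    _ ≤ eexp (2 * l * frobSq B) := by
        rw [← frobSq_transpose]
        exact lintegral_eexp_sqNorm_mulVec_stdGaussian Bᵀ hl₀ (by rwa [specNorm_transpose])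

lemma frobSq_contract (M : Matrix κ (ι × ι') ℝ) (v : ι' → ℝ) :
    frobSq (contract M v) = sqNorm (unfolding M *ᵥ v) := by
  simp only [frobSq, sqNorm, Fintype.sum_prod_type]
  rfl

lemma frobSq_unfolding (M : Matrix κ (ι × ι') ℝ) : frobSq (unfolding M) = frobSq M := by
  simp only [frobSq, unfolding, of_apply, Fintype.sum_prod_type]

lemma specNorm_contract_sq_le (M : Matrix κ (ι × ι') ℝ) (v : ι' → ℝ) :
    specNorm (contract M v) ^ 2 ≤ specNorm M ^ 2 * sqNorm v := by
  refine specNorm_sq_le (mul_nonneg (sq_nonneg _) (sqNorm_nonneg v)) fun u => ?_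
  rw [contract_mulVec, mul_assoc, mul_comm (sqNorm v), ← sqNorm_uncurry_vecMulVec]
  exact sqNorm_mulVec_le M _

lemma specNorm_unfolding_sq_le (M : Matrix κ (ι × ι') ℝ) :
    specNorm (unfolding M) ^ 2 ≤ Fintype.card ι * specNorm M ^ 2 := by
  refine specNorm_sq_le (by positivity) fun v => ?_
  rw [← frobSq_contract, mul_assoc]
  refine (frobSq_le_rank_mul _).trans ?_
  gcongr
  · exact rank_le_card_width _
  · exact specNorm_contract_sq_le M v

lemma IsSubgaussian.lintegral_eexp_sqNorm_mulVec_vecMulVec_le {μ : Measure (ι → ℝ)}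
    {ν : Measure (ι' → ℝ)} [SFinite μ] [SFinite ν] (hμ : IsSubgaussian μ) (hν : IsSubgaussian ν)
    {R : ℝ} (hR : ∀ᵐ v ∂ν, sqNorm v ≤ R) (M : Matrix κ (ι × ι') ℝ) {l : ℝ} (hl₀ : 0 ≤ l)
    (hl : l * (specNorm M ^ 2 * R) ≤ 1 / 4)
    (hl' : 2 * l * (Fintype.card ι * specNorm M ^ 2) ≤ 1 / 4) :
    ∫⁻ z, eexp (l * sqNorm (M *ᵥ Function.uncurry (vecMulVec z.1 z.2))) ∂(μ.prod ν) ≤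
      eexp (4 * l * frobSq M) := by
  have hmeas : Measurable fun z : (ι → ℝ) × (ι' → ℝ) =>
      eexp (l * sqNorm (M *ᵥ Function.uncurry (vecMulVec z.1 z.2))) := by
    have : Measurable fun z : (ι → ℝ) × (ι' → ℝ) => Function.uncurry (vecMulVec z.1 z.2) :=
      measurable_pi_lambda _ fun p => by
        simp only [Function.uncurry, vecMulVec_apply]
        fun_prop
    fun_prop
  calc ∫⁻ z, eexp (l * sqNorm (M *ᵥ Function.uncurry (vecMulVec z.1 z.2))) ∂(μ.prod ν)
      = ∫⁻ v, ∫⁻ u, eexp (l * sqNorm (contract M v *ᵥ u)) ∂μ ∂ν := by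
        simp only [contract_mulVec]
        exact lintegral_prod_symm _ hmeas.aemeasurable
    _ ≤ ∫⁻ v, eexp (2 * l * sqNorm (unfolding M *ᵥ v)) ∂ν := by
        refine lintegral_mono_ae (hR.mono fun v hv => ?_)
        rw [← frobSq_contract]
        refine hμ.lintegral_eexp_sqNorm_mulVec_le _ hl₀ (le_trans ?_ hl)
        gcongr
        exact (specNorm_contract_sq_le M v).trans (by gcongr)
    _ ≤ eexp (2 * (2 * l) * frobSq (unfolding M)) := by
        refine hν.lintegral_eexp_sqNorm_mulVec_le _ (by positivity) (le_trans ?_ hl')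
        gcongr
        exact specNorm_unfolding_sq_le M
    _ = eexp (4 * l * frobSq M) := by
        rw [frobSq_unfolding]
        ring_nf

end QuadraticForms

lemma measurable_mulVec {X κ ι : Type*} [MeasurableSpace X] [Fintype ι] {B : X → Matrix κ ι ℝ}
    {f : X → ι → ℝ} (hB : ∀ i j, Measurable fun x => B x i j) (hf : Measurable f) :
    Measurable fun x => B x *ᵥ f x :=
  measurable_pi_lambda _ fun i => measurable_dotProduct (measurable_pi_lambda _ (hB i)) hf

namespace QueryMaps

variable {N k t : ℕ}

/-- The query matrix of round `j` along the full history `h`. -/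
def query (Q : QueryMaps N k t) (h : Fin t → Fin k → ℝ) (j : Fin t) : Matrix (Fin k) (Fin N) ℝ :=
  Q j fun i => h ⟨i, i.isLt.trans j.isLt⟩

/-- All the query matrices along the history `h`, stacked. -/
def stack (Q : QueryMaps N k t) (h : Fin t → Fin k → ℝ) : Matrix (Fin t × Fin k) (Fin N) ℝ :=
  of fun p => Q.query h p.1 p.2

/-- The squared norm of the part of `θ` seen by the queries along the history `h`. It governs how
much the responses reveal about a planted `θ`. -/
def energy (Q : QueryMaps N k t) (θ : Fin N → ℝ) (h : Fin t → Fin k → ℝ) : ℝ :=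
  sqNorm (Q.stack h *ᵥ θ)

/-- The likelihood ratio, at the history `h`, of the transcript on the input `a + θ` with `a`
standard Gaussian, against independent standard Gaussian responses. -/
def likelihoodRatio (Q : QueryMaps N k t) (θ : Fin N → ℝ) (h : Fin t → Fin k → ℝ) : ℝ≥0∞ :=
  eexp (Function.uncurry h ⬝ᵥ Q.stack h *ᵥ θ - Q.energy θ h / 2)

/-- The query matrix of the first round. -/
def head (Q : QueryMaps N k (t + 1)) : Matrix (Fin k) (Fin N) ℝ :=
  Q 0 fun i => i.elim0

/-- The algorithm that remains after a first round with response `x`. -/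
def tail (Q : QueryMaps N k (t + 1)) (x : Fin k → ℝ) : QueryMaps N k t :=
  fun j h => Q j.succ (vecCons x h)

/-- The algorithm stopped before its last round. -/
def dropLast (Q : QueryMaps N k (t + 1)) : QueryMaps N k t :=
  fun j h => Q j.castSucc h

lemma resp_eq_query_mulVec (Q : QueryMaps N k t) (a : Fin N → ℝ) (j : Fin t) :
    resp Q a j = Q.query (resp Q a) j *ᵥ a := by
  rw [resp]
  rfl

lemma eq_resp {Q : QueryMaps N k t} {a : Fin N → ℝ} {h : Fin t → Fin k → ℝ}
    (hh : ∀ j, h j = Q.query h j *ᵥ a) : h = resp Q a := by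
  funext j
  induction j using WellFoundedLT.induction with
  | ind j ih =>
    rw [hh, resp, query]
    congr 2
    exact funext fun i => ih _ i.isLt

lemma query_cons_zero (Q : QueryMaps N k (t + 1)) (x : Fin k → ℝ) (h : Fin t → Fin k → ℝ) :
    Q.query (vecCons x h) 0 = Q.head :=
  congrArg (Q 0) (funext fun i => i.elim0)

lemma query_cons_succ (Q : QueryMaps N k (t + 1)) (x : Fin k → ℝ) (h : Fin t → Fin k → ℝ)
    (j : Fin t) : Q.query (vecCons x h) j.succ = (Q.tail x).query h j :=
  congrArg (Q j.succ) (funext fun i => by cases i using Fin.cases <;> rfl)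

lemma resp_cons (Q : QueryMaps N k (t + 1)) (a : Fin N → ℝ) :
    resp Q a = vecCons (Q.head *ᵥ a) (resp (Q.tail (Q.head *ᵥ a)) a) := by
  refine (eq_resp fun j => ?_).symm
  cases j using Fin.cases with
  | zero => rw [cons_val_zero, query_cons_zero]
  | succ j => rw [cons_val_succ, query_cons_succ, ← resp_eq_query_mulVec]

lemma resp_dropLast (Q : QueryMaps N k (t + 1)) (a : Fin N → ℝ) :
    resp Q.dropLast a = Fin.init (α := fun _ => Fin k → ℝ) (resp Q a) :=
  (eq_resp fun j => resp_eq_query_mulVec Q a j.castSucc).symm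

lemma resp_add_of_forall_mulVec_eq_zero {Q : QueryMaps N k t} {d : Fin N → ℝ}
    (hd : ∀ j h, Q j h *ᵥ d = 0) (a : Fin N → ℝ) : resp Q (a + d) = resp Q a :=
  (eq_resp fun j => by rw [mulVec_add, query, hd, add_zero, resp_eq_query_mulVec]; rfl).symm

lemma energy_smul (Q : QueryMaps N k t) (c : ℝ) (θ : Fin N → ℝ) (h : Fin t → Fin k → ℝ) :
    Q.energy (c • θ) h = c ^ 2 * Q.energy θ h := by
  rw [energy, mulVec_smul, sqNorm_smul, energy]

lemma energy_congr {Q : QueryMaps N k (t + 1)} (θ : Fin N → ℝ) {h h' : Fin (t + 1) → Fin k → ℝ}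
    (hh : Fin.init h = Fin.init h') : Q.energy θ h = Q.energy θ h' := by
  have hquery (j : Fin (t + 1)) : Q.query h j = Q.query h' j :=
    congrArg (Q j) (funext fun i => congrFun hh ⟨i, i.isLt.trans_le j.is_le⟩)
  simp only [energy, stack, hquery]

lemma likelihoodRatio_cons (Q : QueryMaps N k (t + 1)) (θ : Fin N → ℝ) (x : Fin k → ℝ)
    (h : Fin t → Fin k → ℝ) :
    Q.likelihoodRatio θ (vecCons x h) =
      eexp (x ⬝ᵥ Q.head *ᵥ θ - sqNorm (Q.head *ᵥ θ) / 2) * (Q.tail x).likelihoodRatio θ h := by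
  have hzero (i : Fin k) : (Q.stack (vecCons x h) *ᵥ θ) (0, i) = (Q.head *ᵥ θ) i := by
    rw [← query_cons_zero Q x h]
    rfl
  have hsucc (j : Fin t) (i : Fin k) :
      (Q.stack (vecCons x h) *ᵥ θ) (j.succ, i) = ((Q.tail x).stack h *ᵥ θ) (j, i) := by
    change (Q.query (vecCons x h) j.succ *ᵥ θ) i = _
    rw [query_cons_succ]
    rfl
  rw [likelihoodRatio, likelihoodRatio, ← eexp_add]
  congr 1
  simp only [energy, sqNorm, dotProduct, Fintype.sum_prod_type, Fin.sum_univ_succ, hzero, hsucc,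
    Function.uncurry, cons_val_zero, cons_val_succ]
  ring

lemma measurable_resp {Ω : Type*} [MeasurableSpace Ω] {Qf : Ω → QueryMaps N k t}
    (hQ : ∀ (j : Fin t) (i : Fin k) (l : Fin N),
      Measurable fun p : Ω × (Fin (j : ℕ) → Fin k → ℝ) => Qf p.1 j p.2 i l) :
    Measurable fun p : Ω × (Fin N → ℝ) => resp (Qf p.1) p.2 := by
  refine measurable_pi_lambda _ fun j => ?_
  induction j using WellFoundedLT.induction with
  | ind j ih =>
    simp only [resp_eq_query_mulVec]
    refine measurable_mulVec (fun i l => (hQ j i l).comp (measurable_fst.prodMk ?_)) measurable_snd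
    exact measurable_pi_lambda _ fun i => ih _ i.isLt

namespace Valid

lemma tail {Q : QueryMaps N k (t + 1)} (hQ : Q.Valid) (x : Fin k → ℝ) : (Q.tail x).Valid := by
  refine ⟨fun j i l => (hQ.1 j.succ i l).comp (measurable_pi_lambda _ fun m => ?_),
    fun j h => hQ.2.1 _ _, fun j i hij h => ?_⟩
  · cases m using Fin.cases with
    | zero => exact measurable_const
    | succ m => exact measurable_pi_apply m
  · have hprefix : vecCons x (prefixHist h hij) =
        prefixHist (j := j.succ) (i := i.succ) (vecCons x h) (Nat.succ_lt_succ hij) :=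
      funext fun m => by cases m using Fin.cases <;> rfl
    exact (congrArg (fun h' => Q j.succ (vecCons x h) * (Q i.succ h')ᵀ) hprefix).trans
      (hQ.2.2 j.succ i.succ _ (vecCons x h))

lemma head_mul_transpose {Q : QueryMaps N k (t + 1)} (hQ : Q.Valid) : Q.head * Q.headᵀ = 1 :=
  hQ.2.1 0 _

lemma tail_mul_head_transpose {Q : QueryMaps N k (t + 1)} (hQ : Q.Valid) (x : Fin k → ℝ)
    (j : Fin t) (h : Fin (j : ℕ) → Fin k → ℝ) : Q.tail x j h * Q.headᵀ = 0 := by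
  have hprefix : (fun i => i.elim0) = prefixHist (j := j.succ) (i := 0) (vecCons x h) j.succ_pos :=
    funext fun i => i.elim0
  exact (congrArg (fun h' => Q.tail x j h * (Q 0 h')ᵀ) hprefix).trans
    (hQ.2.2 j.succ 0 j.succ_pos (vecCons x h))

lemma dropLast {Q : QueryMaps N k (t + 1)} (hQ : Q.Valid) : Q.dropLast.Valid :=
  ⟨fun j => hQ.1 j.castSucc, fun j => hQ.2.1 j.castSucc,
    fun j i => hQ.2.2 j.castSucc i.castSucc⟩

lemma stack_mul_transpose {Q : QueryMaps N k t} (hQ : Q.Valid) (h : Fin t → Fin k → ℝ) :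
    Q.stack h * (Q.stack h)ᵀ = 1 := by
  have hlt {i j : Fin t} (hij : i < j) : Q.query h j * (Q.query h i)ᵀ = 0 := hQ.2.2 j i hij _
  have hne {i j : Fin t} (hij : i ≠ j) : Q.query h i * (Q.query h j)ᵀ = 0 := by
    rcases hij.lt_or_gt with hij | hij
    · rw [← transpose_eq_zero, transpose_mul, transpose_transpose, hlt hij]
    · exact hlt hij
  ext ⟨i, a⟩ ⟨j, b⟩
  change (Q.query h i * (Q.query h j)ᵀ) a b = _
  by_cases hij : i = j
  · subst hij
    rw [query, hQ.2.1]
    simp [one_apply]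
  · rw [hne hij]
    simp [hij]

lemma measurable_resp {Q : QueryMaps N k t} (hQ : Q.Valid) : Measurable (resp Q) :=
  (QueryMaps.measurable_resp (Qf := fun _ : Unit => Q) fun j i l =>
    (hQ.1 j i l).comp measurable_snd).comp (measurable_prodMk_left (x := ()))

lemma measurable_stack_mulVec {Q : QueryMaps N k t} (hQ : Q.Valid) {X : Type*} [MeasurableSpace X]
    {θ : X → Fin N → ℝ} (hθ : Measurable θ) {h : X → Fin t → Fin k → ℝ} (hh : Measurable h) :
    Measurable fun x => Q.stack (h x) *ᵥ θ x :=
  measurable_mulVec (fun p l => (hQ.1 p.1 p.2 l).comp (by fun_prop)) hθ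

lemma measurable_energy {Q : QueryMaps N k t} (hQ : Q.Valid) {X : Type*} [MeasurableSpace X]
    {θ : X → Fin N → ℝ} (hθ : Measurable θ) {h : X → Fin t → Fin k → ℝ} (hh : Measurable h) :
    Measurable fun x => Q.energy (θ x) (h x) :=
  measurable_sqNorm.comp (hQ.measurable_stack_mulVec hθ hh)

lemma measurable_likelihoodRatio {Q : QueryMaps N k t} (hQ : Q.Valid) {X : Type*}
    [MeasurableSpace X] {θ : X → Fin N → ℝ} (hθ : Measurable θ) {h : X → Fin t → Fin k → ℝ}
    (hh : Measurable h) : Measurable fun x => Q.likelihoodRatio (θ x) (h x) := by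
  have hcorr := measurable_dotProduct (f := fun x => Function.uncurry (h x))
    (measurable_pi_lambda _ fun p => by simp only [Function.uncurry]; fun_prop)
    (hQ.measurable_stack_mulVec hθ hh)
  exact measurable_eexp.comp (hcorr.sub ((hQ.measurable_energy hθ hh).div_const 2))

end Valid

end QueryMaps

section TranscriptLaw

variable {N k t : ℕ}

lemma measurePreserving_vecCons (μ : Measure (Fin k → ℝ)) [SigmaFinite μ] :
    MeasurePreserving (fun p : (Fin k → ℝ) × (Fin t → Fin k → ℝ) => vecCons p.1 p.2)
      (μ.prod (Measure.pi fun _ => μ)) (Measure.pi fun _ => μ) := by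
  have hcons : (fun p : (Fin k → ℝ) × (Fin t → Fin k → ℝ) => vecCons p.1 p.2) =
      (MeasurableEquiv.piFinSuccAbove (fun _ => Fin k → ℝ) 0).symm :=
    funext fun p => funext fun j => by cases j using Fin.cases <;> rfl
  rw [hcons]
  exact (measurePreserving_piFinSuccAbove (fun _ : Fin (t + 1) => μ) 0).symm

lemma lintegral_pi_fin_succ (μ : Measure (Fin k → ℝ)) [SigmaFinite μ]
    {f : (Fin (t + 1) → Fin k → ℝ) → ℝ≥0∞} (hf : Measurable f) :
    ∫⁻ h, f h ∂(Measure.pi fun _ => μ) =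
      ∫⁻ x, ∫⁻ h, f (vecCons x h) ∂(Measure.pi fun _ => μ) ∂μ := by
  have hmp := measurePreserving_vecCons (t := t) μ
  rw [← hmp.lintegral_comp hf]
  exact lintegral_prod _ (hf.comp hmp.measurable).aemeasurable

namespace QueryMaps

lemma Valid.resp_resample_add {Q : QueryMaps N k (t + 1)} (hQ : Q.Valid) (θ : Fin N → ℝ)
    (z : (Fin N → ℝ) × (Fin k → ℝ)) :
    resp Q (resample Q.head z + θ) = vecCons (z.2 + Q.head *ᵥ θ)
      (resp (Q.tail (z.2 + Q.head *ᵥ θ)) (z.1 + θ)) := by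
  have hresample : resample Q.head z + θ = z.1 + θ + Q.headᵀ *ᵥ (z.2 - Q.head *ᵥ z.1) := by
    rw [resample, mulVec_sub]
    abel
  rw [resp_cons, mulVec_add, mulVec_resample hQ.head_mul_transpose, hresample,
    resp_add_of_forall_mulVec_eq_zero]
  intro j h
  rw [mulVec_mulVec, hQ.tail_mul_head_transpose, zero_mulVec]

/-- Each new query is orthogonal to the previous ones, so it sees a fresh Gaussian component of the
input: the input may be resampled after the first round without changing the law of the
transcript. -/
theorem Valid.lintegral_resp_add : ∀ {t : ℕ} {Q : QueryMaps N k t} (_ : Q.Valid) (θ : Fin N → ℝ)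
    {φ : (Fin t → Fin k → ℝ) → ℝ≥0∞} (_ : Measurable φ),
    ∫⁻ a, φ (resp Q (a + θ)) ∂(γ (Fin N)) =
      ∫⁻ h, Q.likelihoodRatio θ h * φ h ∂(Measure.pi fun _ => γ (Fin k))
  | 0, Q, _, θ, φ, _ => by
    have hφ (h : Fin 0 → Fin k → ℝ) : φ h = φ default := congrArg φ (Subsingleton.elim _ _)
    have hlr (h : Fin 0 → Fin k → ℝ) : Q.likelihoodRatio θ h = 1 := by
      simp [likelihoodRatio, energy, sqNorm, dotProduct]
    simp only [hφ, hlr, lintegral_const, measure_univ, mul_one, one_mul]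
  | t + 1, Q, hQ, θ, φ, hφ => by
    let ψ (x : Fin k → ℝ) (b : Fin N → ℝ) : ℝ≥0∞ := φ (vecCons x (resp (Q.tail x) (b + θ)))
    have hψ (z : (Fin N → ℝ) × (Fin k → ℝ)) :
        φ (resp Q (resample Q.head z + θ)) = ψ (z.2 + Q.head *ᵥ θ) z.1 := by
      rw [hQ.resp_resample_add]
    have hmp := measurePreserving_resample hQ.head_mul_transpose
    have hmeas : Measurable fun a => φ (resp Q (a + θ)) :=
      hφ.comp (hQ.measurable_resp.comp (measurable_add_const θ))
    have hψ_meas : Measurable fun p : (Fin k → ℝ) × (Fin N → ℝ) => ψ p.1 p.2 := by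
      have hcomp := hmeas.comp (hmp.measurable.comp
        (measurable_snd.prodMk (measurable_fst.sub_const (Q.head *ᵥ θ))))
      refine (congrArg Measurable (funext fun p => ?_)).mp hcomp
      simp only [Function.comp_apply, hψ, sub_add_cancel]
    calc ∫⁻ a, φ (resp Q (a + θ)) ∂(γ (Fin N))
        = ∫⁻ x, ∫⁻ b, ψ (x + Q.head *ᵥ θ) b ∂(γ (Fin N)) ∂(γ (Fin k)) := by
          rw [← hmp.lintegral_comp hmeas]
          refine (lintegral_prod_symm _ (hmeas.comp hmp.measurable).aemeasurable).trans ?_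
          exact lintegral_congr fun x => lintegral_congr fun b => hψ (b, x)
      _ = ∫⁻ x, eexp (x ⬝ᵥ Q.head *ᵥ θ - sqNorm (Q.head *ᵥ θ) / 2) *
            ∫⁻ b, ψ x b ∂(γ (Fin N)) ∂(γ (Fin k)) :=
          lintegral_add_stdGaussian _ hψ_meas.lintegral_prod_right'
      _ = ∫⁻ x, ∫⁻ h, Q.likelihoodRatio θ (vecCons x h) * φ (vecCons x h)
            ∂(Measure.pi fun _ => γ (Fin k)) ∂(γ (Fin k)) := by
          refine lintegral_congr fun x => ?_
          have hφx : Measurable fun h : Fin t → Fin k → ℝ => φ (vecCons x h) :=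
            hφ.comp ((measurePreserving_vecCons (γ (Fin k))).measurable.comp measurable_prodMk_left)
          have hlr : Measurable ((Q.tail x).likelihoodRatio θ) :=
            (hQ.tail x).measurable_likelihoodRatio measurable_const measurable_id
          simp only [likelihoodRatio_cons, mul_assoc]
          rw [(hQ.tail x).lintegral_resp_add θ hφx]
          exact (lintegral_const_mul _ (hlr.mul hφx)).symm
      _ = ∫⁻ h, Q.likelihoodRatio θ h * φ h ∂(Measure.pi fun _ => γ (Fin k)) :=
          (lintegral_pi_fin_succ _
            ((hQ.measurable_likelihoodRatio measurable_const measurable_id).mul hφ)).symm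

variable {Θ : Type*} [MeasurableSpace Θ]

/-- The joint law of a parameter `x ∼ π` and of the transcript of `Q` on the input `a + θ x`, with
`a` standard Gaussian and independent of `x`. -/
def transcriptLaw (Q : QueryMaps N k t) (π : Measure Θ) (θ : Θ → Fin N → ℝ) :
    Measure (Θ × (Fin t → Fin k → ℝ)) :=
  (π.prod (γ (Fin N))).map fun z => (z.1, resp Q (z.2 + θ z.1))

lemma Valid.measurable_transcript {Q : QueryMaps N k t} (hQ : Q.Valid) {θ : Θ → Fin N → ℝ}
    (hθ : Measurable θ) :
    Measurable fun z : Θ × (Fin N → ℝ) => (z.1, resp Q (z.2 + θ z.1)) :=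
  measurable_fst.prodMk (hQ.measurable_resp.comp (by fun_prop))

lemma Valid.isProbabilityMeasure_transcriptLaw {Q : QueryMaps N k t} (hQ : Q.Valid)
    (π : Measure Θ) [IsProbabilityMeasure π] {θ : Θ → Fin N → ℝ} (hθ : Measurable θ) :
    IsProbabilityMeasure (Q.transcriptLaw π θ) :=
  Measure.isProbabilityMeasure_map (hQ.measurable_transcript hθ).aemeasurable

lemma Valid.transcriptLaw_eq_withDensity {Q : QueryMaps N k t} (hQ : Q.Valid) (π : Measure Θ)
    [SFinite π] {θ : Θ → Fin N → ℝ} (hθ : Measurable θ) :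
    Q.transcriptLaw π θ = (π.prod (Measure.pi fun _ => γ (Fin k))).withDensity
      fun z => Q.likelihoodRatio (θ z.1) z.2 := by
  have hmeas := hQ.measurable_transcript hθ
  have hlr : Measurable fun z : Θ × (Fin t → Fin k → ℝ) => Q.likelihoodRatio (θ z.1) z.2 :=
    hQ.measurable_likelihoodRatio (hθ.comp measurable_fst) measurable_snd
  refine Measure.ext_of_lintegral _ fun f hf => ?_
  rw [transcriptLaw, lintegral_map hf hmeas, lintegral_withDensity_eq_lintegral_mul _ hlr hf,
    lintegral_prod _ (hlr.mul hf).aemeasurable]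
  refine (lintegral_prod _ (hf.comp hmeas).aemeasurable).trans (lintegral_congr fun x => ?_)
  exact hQ.lintegral_resp_add (θ x) (hf.comp measurable_prodMk_left)

lemma Valid.transcriptLaw_dropLast {Q : QueryMaps N k (t + 1)} (hQ : Q.Valid) (π : Measure Θ)
    {θ : Θ → Fin N → ℝ} (hθ : Measurable θ) :
    Q.dropLast.transcriptLaw π θ =
      (Q.transcriptLaw π θ).map fun z => (z.1, Fin.init (α := fun _ => Fin k → ℝ) z.2) := by
  rw [transcriptLaw, transcriptLaw, Measure.map_map _ (hQ.measurable_transcript hθ)]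
  · simp only [resp_dropLast]
    rfl
  · exact measurable_fst.prodMk (measurable_pi_lambda _ fun j =>
      (measurable_pi_apply j.castSucc).comp measurable_snd)

lemma measurable_snoc_zero : Measurable fun h : Fin t → Fin k → ℝ =>
    Fin.snoc (α := fun _ => Fin k → ℝ) h (0 : Fin k → ℝ) :=
  measurable_pi_lambda _ fun j => by
    cases j using Fin.lastCases with
    | last => simpa only [Fin.snoc_last] using measurable_const
    | cast j => simpa only [Fin.snoc_castSucc] using measurable_pi_apply j

/-- The last query does not depend on the last response, which may be replaced by zero. -/
lemma Valid.transcriptLaw_lt_energy {Q : QueryMaps N k (t + 1)} (hQ : Q.Valid) (π : Measure Θ)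
    {θ : Θ → Fin N → ℝ} (hθ : Measurable θ) (s : ℝ) :
    Q.transcriptLaw π θ {z | s < Q.energy (θ z.1) z.2} =
      Q.dropLast.transcriptLaw π θ {z | s < Q.energy (θ z.1) (Fin.snoc z.2 0)} := by
  have hinit : Measurable fun z : Θ × (Fin (t + 1) → Fin k → ℝ) =>
      (z.1, Fin.init (α := fun _ => Fin k → ℝ) z.2) :=
    measurable_fst.prodMk (measurable_pi_lambda _ fun j =>
      (measurable_pi_apply j.castSucc).comp measurable_snd)
  have henergy : Measurable fun z : Θ × (Fin t → Fin k → ℝ) =>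
      Q.energy (θ z.1) (Fin.snoc z.2 0) :=
    hQ.measurable_energy (hθ.comp measurable_fst) (measurable_snoc_zero.comp measurable_snd)
  rw [hQ.transcriptLaw_dropLast π hθ,
    Measure.map_apply hinit (measurableSet_lt measurable_const henergy)]
  congr 1
  ext z
  rw [Set.mem_preimage, Set.mem_ofPred_eq, Set.mem_ofPred_eq,
    energy_congr (h := z.2) (h' := Fin.snoc (Fin.init z.2) 0) _ (by rw [Fin.init_snoc])]

/-- The likelihood ratio is unbounded even at small energy, but where it exceeds `exp (s + m)` it is
dominated by that of the doubled shift, which integrates to one. -/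
lemma likelihoodRatio_le_of_energy_le {Q : QueryMaps N k t} {θ : Fin N → ℝ} {h : Fin t → Fin k → ℝ}
    {s : ℝ} (hs : Q.energy θ h ≤ s) (m : ℝ) :
    Q.likelihoodRatio θ h ≤
      eexp (-m) * Q.likelihoodRatio ((2 : ℝ) • θ) h + eexp (s + m) := by
  rw [likelihoodRatio, likelihoodRatio, energy_smul, mulVec_smul, dotProduct_smul, smul_eq_mul,
    ← eexp_add]
  rcases le_total (Function.uncurry h ⬝ᵥ Q.stack h *ᵥ θ - Q.energy θ h / 2) (s + m) with
    hsmall | hlarge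
  · exact (eexp_le_eexp hsmall).trans le_add_self
  · exact (eexp_le_eexp (by linarith)).trans le_self_add

theorem Valid.transcriptLaw_inter_energy_le {Q : QueryMaps N k t} (hQ : Q.Valid) (π : Measure Θ)
    [IsProbabilityMeasure π] {θ : Θ → Fin N → ℝ} (hθ : Measurable θ)
    {F : Set (Θ × (Fin t → Fin k → ℝ))} (hF : MeasurableSet F) (s m : ℝ) {δ : ℝ≥0∞}
    (hδ : ∀ h, π {x | (x, h) ∈ F} ≤ δ) :
    Q.transcriptLaw π θ (F ∩ {z | Q.energy (θ z.1) z.2 ≤ s}) ≤ eexp (-m) + eexp (s + m) * δ := by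
  let ν := π.prod (Measure.pi fun _ : Fin t => γ (Fin k))
  have hlr₂ : Measurable fun z : Θ × (Fin t → Fin k → ℝ) =>
      Q.likelihoodRatio ((2 : ℝ) • θ z.1) z.2 :=
    hQ.measurable_likelihoodRatio (by fun_prop) measurable_snd
  have hone : ∫⁻ z, Q.likelihoodRatio ((2 : ℝ) • θ z.1) z.2 ∂ν = 1 := by
    have hθ₂ : Measurable fun x => (2 : ℝ) • θ x := by fun_prop
    have := hQ.isProbabilityMeasure_transcriptLaw π hθ₂
    rw [← setLIntegral_univ, ← withDensity_apply _ .univ, ← hQ.transcriptLaw_eq_withDensity π hθ₂,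
      measure_univ]
  have hν : ν F ≤ δ := by
    rw [Measure.prod_apply_symm hF]
    exact (lintegral_mono fun h => hδ h).trans_eq (by simp)
  have hS : MeasurableSet (F ∩ {z | Q.energy (θ z.1) z.2 ≤ s}) := hF.inter <|
    measurableSet_le (hQ.measurable_energy (hθ.comp measurable_fst) measurable_snd)
      measurable_const
  rw [hQ.transcriptLaw_eq_withDensity π hθ, withDensity_apply _ hS]
  calc ∫⁻ z in F ∩ {z | Q.energy (θ z.1) z.2 ≤ s}, Q.likelihoodRatio (θ z.1) z.2 ∂ν
      ≤ ∫⁻ z in F ∩ {z | Q.energy (θ z.1) z.2 ≤ s},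
          (eexp (-m) * Q.likelihoodRatio ((2 : ℝ) • θ z.1) z.2 + eexp (s + m)) ∂ν :=
        setLIntegral_mono ((hlr₂.const_mul _).add_const _) fun z hz =>
          likelihoodRatio_le_of_energy_le hz.2 m
    _ = eexp (-m) * ∫⁻ z in F ∩ {z | Q.energy (θ z.1) z.2 ≤ s},
            Q.likelihoodRatio ((2 : ℝ) • θ z.1) z.2 ∂ν +
          eexp (s + m) * ν (F ∩ {z | Q.energy (θ z.1) z.2 ≤ s}) := by
        rw [lintegral_add_left (hlr₂.const_mul _), lintegral_const_mul _ hlr₂, setLIntegral_const]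
    _ ≤ eexp (-m) * 1 + eexp (s + m) * δ := by
        gcongr
        · exact (setLIntegral_le_lintegral _ _).trans_eq hone
        · exact (measure_mono Set.inter_subset_left).trans hν
    _ = eexp (-m) + eexp (s + m) * δ := by rw [mul_one]

lemma Valid.transcriptLaw_le_lt_energy_add {Q : QueryMaps N k t} (hQ : Q.Valid) (π : Measure Θ)
    [IsProbabilityMeasure π] {θ : Θ → Fin N → ℝ} (hθ : Measurable θ)
    {F : Set (Θ × (Fin t → Fin k → ℝ))} (hF : MeasurableSet F) (s m : ℝ)
    (hprior : ∀ h, π {x | (x, h) ∈ F} ≤ eexp (-(s + 2 * m))) :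
    Q.transcriptLaw π θ F ≤
      Q.transcriptLaw π θ {z | s < Q.energy (θ z.1) z.2} + 2 * eexp (-m) :=
  calc Q.transcriptLaw π θ F
      ≤ Q.transcriptLaw π θ {z | s < Q.energy (θ z.1) z.2} +
          Q.transcriptLaw π θ (F ∩ {z | Q.energy (θ z.1) z.2 ≤ s}) := by
        refine (measure_mono fun z hz => ?_).trans (measure_union_le _ _)
        exact (lt_or_ge s (Q.energy (θ z.1) z.2)).imp_right fun hle => ⟨hz, hle⟩
    _ ≤ Q.transcriptLaw π θ {z | s < Q.energy (θ z.1) z.2} +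
          (eexp (-m) + eexp (s + m) * eexp (-(s + 2 * m))) := by
        gcongr
        exact hQ.transcriptLaw_inter_energy_le π hθ hF s m hprior
    _ = Q.transcriptLaw π θ {z | s < Q.energy (θ z.1) z.2} + 2 * eexp (-m) := by
        rw [← eexp_add, two_mul]
        ring_nf

end QueryMaps

end TranscriptLaw

section EnergyGrowth

/-- The planted rank-one direction `(τ / √n) u vᵀ`, flattened. For sign vectors `u` and `v` the
matrix has spectral norm `τ √n`, a constant multiple of that of a Gaussian matrix. -/
def spike {n : ℕ} (τ : ℝ) (z : (Fin n → ℝ) × (Fin n → ℝ)) : Fin (n * n) → ℝ :=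
  (τ / √n) • tensor z.1 z.2

lemma measurable_spike {n : ℕ} (τ : ℝ) :
    Measurable (spike τ : (Fin n → ℝ) × (Fin n → ℝ) → Fin (n * n) → ℝ) := by
  unfold spike tensor _root_.vec
  simp only [of_apply]
  fun_prop

/-- The prior on the directions of the spike: two independent uniformly random sign vectors. -/
def signPairs (n : ℕ) : Measure ((Fin n → ℝ) × (Fin n → ℝ)) :=
  (signs (Fin n)).prod (signs (Fin n))

instance (n : ℕ) : IsProbabilityMeasure (signPairs n) :=
  inferInstanceAs (IsProbabilityMeasure ((signs (Fin n)).prod (signs (Fin n))))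

/-- A bound on the factor by which the captured energy of `spike τ` grows in each round, outside an
event of probability of order `exp (-L)`. -/
def growth (τ L : ℝ) : ℝ := 32 * τ ^ 2 * (1 + L)

lemma one_add_le_growth_pow {τ L : ℝ} (hτ : 1 ≤ τ) (hL : 0 ≤ L) (t : ℕ) :
    1 + (t : ℝ) ≤ growth τ L ^ t := by
  have hgrowth : 2 ≤ growth τ L := by
    unfold growth
    nlinarith [one_le_pow₀ hτ (n := 2)]
  calc 1 + (t : ℝ) = 1 + t * (2 - 1) := by ring
    _ ≤ (1 + (2 - 1)) ^ t := one_add_mul_le_pow (by norm_num) t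
    _ ≤ growth τ L ^ t := by
      gcongr
      linarith

lemma sum_eexp_neg_add_le (L : ℝ) (t : ℕ) :
    ∑ j ∈ Finset.range t, eexp (-(L + j)) ≤ 2 * eexp (-L) := by
  have hhalf : eexp (-1) ≤ 2⁻¹ := by
    rw [← ENNReal.ofReal_ofNat, ← ENNReal.ofReal_inv_of_pos two_pos, eexp, Real.exp_neg]
    gcongr
    linarith [Real.add_one_le_exp (1 : ℝ)]
  have hterm (j : ℕ) : eexp (-(L + j)) = eexp (-L) * eexp (-1) ^ j := by
    rw [eexp, eexp, eexp, ← ENNReal.ofReal_pow (Real.exp_pos _).le, ← Real.exp_nat_mul,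
      ← ENNReal.ofReal_mul (Real.exp_pos _).le, ← Real.exp_add]
    congr 2
    ring
  calc ∑ j ∈ Finset.range t, eexp (-(L + j))
      ≤ ∑ j ∈ Finset.range t, eexp (-L) * 2⁻¹ ^ j :=
        Finset.sum_le_sum fun j _ => by rw [hterm]; gcongr
    _ = eexp (-L) * ∑ j ∈ Finset.range t, 2⁻¹ ^ j := Finset.mul_sum .. |>.symm
    _ ≤ eexp (-L) * 2 := by
        gcongr
        exact (ENNReal.sum_le_tsum _).trans_eq ENNReal.tsum_geometric_two
    _ = 2 * eexp (-L) := mul_comm _ _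

namespace QueryMaps

variable {n k t : ℕ}

lemma energy_spike (Q : QueryMaps (n * n) k t) (τ : ℝ) (z : (Fin n → ℝ) × (Fin n → ℝ))
    (h : Fin t → Fin k → ℝ) :
    Q.energy (spike τ z) h = τ ^ 2 / n * sqNorm
      ((Q.stack h).submatrix id finProdFinEquiv *ᵥ Function.uncurry (vecMulVec z.1 z.2)) := by
  have htensor :
      tensor z.1 z.2 = Function.uncurry (vecMulVec z.1 z.2) ∘ finProdFinEquiv.symm := rfl
  rw [energy, spike, mulVec_smul, sqNorm_smul, htensor, div_pow, Real.sq_sqrt n.cast_nonneg,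
    submatrix_mulVec_equiv]
  rfl

lemma Valid.lintegral_eexp_energy_spike_le {Q : QueryMaps (n * n) k t} (hQ : Q.Valid) (hn : 0 < n)
    {τ : ℝ} (hτ : 0 < τ) (h : Fin t → Fin k → ℝ) :
    ∫⁻ z, eexp (Q.energy (spike τ z) h / (8 * τ ^ 2)) ∂(signPairs n) ≤
      eexp ((t : ℝ) * (k / n) / 2) := by
  have : (0 : ℝ) < n := mod_cast hn
  let M := (Q.stack h).submatrix id finProdFinEquiv
  have hM : M * Mᵀ = 1 := by
    rw [← hQ.stack_mul_transpose h, transpose_submatrix, submatrix_mul_equiv, submatrix_id_id]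
  have hM_norm : specNorm M ^ 2 ≤ 1 :=
    pow_le_one₀ (specNorm_nonneg M) (specNorm_le_one_of_mul_transpose hM)
  have hM_frob : frobSq M = t * k := by
    rw [frobSq_of_mul_transpose hM, Fintype.card_prod, Fintype.card_fin, Fintype.card_fin]
    push_cast
    rfl
  have hscale (z : (Fin n → ℝ) × (Fin n → ℝ)) : Q.energy (spike τ z) h / (8 * τ ^ 2) =
      1 / (8 * n) * sqNorm (M *ᵥ Function.uncurry (vecMulVec z.1 z.2)) := by
    rw [energy_spike]
    field_simp
    rfl
  have hsmall : 1 / (8 * (n : ℝ)) * (n * specNorm M ^ 2) ≤ 1 / 8 := by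
    calc 1 / (8 * (n : ℝ)) * (n * specNorm M ^ 2) = 1 / 8 * specNorm M ^ 2 := by field_simp
      _ ≤ 1 / 8 := by linarith
  calc ∫⁻ z, eexp (Q.energy (spike τ z) h / (8 * τ ^ 2)) ∂(signPairs n)
      ≤ eexp (4 * (1 / (8 * n)) * frobSq M) := by
        simp only [hscale]
        refine isSubgaussian_signs.lintegral_eexp_sqNorm_mulVec_vecMulVec_le isSubgaussian_signs
          (sqNorm_eq_card_ae_signs.mono fun _ => Eq.le) M (by positivity) ?_ ?_ <;>
        · rw [Fintype.card_fin]
          linarith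
    _ = eexp ((t : ℝ) * (k / n) / 2) := by
        rw [hM_frob]
        congr 1
        field_simp
        ring

lemma Valid.signPairs_lt_energy_le {Q : QueryMaps (n * n) k t} (hQ : Q.Valid) (hn : 0 < n)
    {τ : ℝ} (hτ : 0 < τ) (h : Fin t → Fin k → ℝ) (s : ℝ) :
    signPairs n {z | s < Q.energy (spike τ z) h} ≤
      eexp (-(s / (8 * τ ^ 2)) + (t : ℝ) * (k / n) / 2) := by
  have henergy : Measurable fun z => Q.energy (spike τ z) h / (8 * τ ^ 2) :=
    (hQ.measurable_energy (measurable_spike τ) measurable_const).div_const _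
  have hscale (z : (Fin n → ℝ) × (Fin n → ℝ)) (hz : s < Q.energy (spike τ z) h) :
      s / (8 * τ ^ 2) ≤ Q.energy (spike τ z) h / (8 * τ ^ 2) := by gcongr
  rw [eexp_add]
  refine (measure_mono hscale).trans <| (measure_le_le_lintegral_eexp _ henergy _).trans ?_
  gcongr
  exact hQ.lintegral_eexp_energy_spike_le hn hτ h

/-- While the energy captured so far is at most `s`, conditioning on the transcript inflates prior
probabilities by about `exp s` only, whereas the next query captures energy `growth τ L * s` with
prior probability well below `exp (-s)`. -/
lemma Valid.transcriptLaw_growth_lt_energy_le_dropLast {Q : QueryMaps (n * n) k (t + 1)}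
    (hQ : Q.Valid) (hn : 0 < n) (hk : n ≤ k) {τ L : ℝ} (hτ : 1 ≤ τ) (hL : 0 ≤ L) :
    Q.transcriptLaw (signPairs n) (spike τ)
        {z | growth τ L ^ (t + 1) * (k / n) < Q.energy (spike τ z.1) z.2} ≤
      Q.dropLast.transcriptLaw (signPairs n) (spike τ)
        {z | growth τ L ^ t * (k / n) < Q.dropLast.energy (spike τ z.1) z.2} +
      2 * eexp (-(L + t)) := by
  have hκ : (1 : ℝ) ≤ k / n := by
    rw [one_le_div₀ (mod_cast hn)]
    exact mod_cast hk
  have hpow : (1 + t : ℝ) * (k / n) ≤ growth τ L ^ t * (k / n) := by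
    gcongr
    exact one_add_le_growth_pow hτ hL t
  have hfactor : growth τ L ^ (t + 1) * (k / n) / (8 * τ ^ 2) =
      4 * (1 + L) * (growth τ L ^ t * (k / n)) := by
    rw [pow_succ, growth]
    field_simp
    ring
  have hF : MeasurableSet {z : ((Fin n → ℝ) × (Fin n → ℝ)) × (Fin t → Fin k → ℝ) |
      growth τ L ^ (t + 1) * (k / n) < Q.energy (spike τ z.1) (Fin.snoc z.2 0)} :=
    measurableSet_lt measurable_const <| hQ.measurable_energy
      ((measurable_spike τ).comp measurable_fst) (measurable_snoc_zero.comp measurable_snd)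
  rw [hQ.transcriptLaw_lt_energy _ (measurable_spike τ)]
  refine hQ.dropLast.transcriptLaw_le_lt_energy_add _ (measurable_spike τ) hF _ _ fun h => ?_
  refine (hQ.signPairs_lt_energy_le hn (by positivity) (Fin.snoc h 0) _).trans (eexp_le_eexp ?_)
  have ht : (1 + t : ℝ) ≤ (1 + t) * (k / n) := le_mul_of_one_le_right (by positivity) hκ
  have hL_mul : L ≤ L * (growth τ L ^ t * (k / n)) :=
    le_mul_of_one_le_right hL (by linarith [t.cast_nonneg (α := ℝ)])
  rw [hfactor]
  push_cast
  linarith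

theorem Valid.transcriptLaw_growth_lt_energy_le (hn : 0 < n) (hk : n ≤ k) {τ L : ℝ}
    (hτ : 1 ≤ τ) (hL : 0 ≤ L) {Q : QueryMaps (n * n) k t} (hQ : Q.Valid) :
    Q.transcriptLaw (signPairs n) (spike τ)
        {z | growth τ L ^ t * (k / n) < Q.energy (spike τ z.1) z.2} ≤
      ∑ j ∈ Finset.range t, 2 * eexp (-(L + j)) := by
  induction t with
  | zero =>
    have henergy (z : ((Fin n → ℝ) × (Fin n → ℝ)) × (Fin 0 → Fin k → ℝ)) :
        ¬ (k / n : ℝ) < Q.energy (spike τ z.1) z.2 := by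
      rw [energy, sqNorm, Fintype.sum_empty, not_lt]
      positivity
    simp [henergy]
  | succ t ih =>
    rw [Finset.sum_range_succ]
    refine (hQ.transcriptLaw_growth_lt_energy_le_dropLast hn hk hτ hL).trans ?_
    gcongr
    exact ih hQ.dropLast

theorem Valid.transcriptLaw_le (hn : 0 < n) (hk : n ≤ k) {τ L : ℝ} (hτ : 1 ≤ τ) (hL : 0 ≤ L)
    {Q : QueryMaps (n * n) k t} (hQ : Q.Valid)
    {F : Set (((Fin n → ℝ) × (Fin n → ℝ)) × (Fin t → Fin k → ℝ))} (hF : MeasurableSet F)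
    (hprior : ∀ h, signPairs n {z | (z, h) ∈ F} ≤
      eexp (-(growth τ L ^ t * (k / n) + 2 * L))) :
    Q.transcriptLaw (signPairs n) (spike τ) F ≤ 6 * eexp (-L) :=
  calc Q.transcriptLaw (signPairs n) (spike τ) F
      ≤ ∑ j ∈ Finset.range t, 2 * eexp (-(L + j)) + 2 * eexp (-L) := by
        refine (hQ.transcriptLaw_le_lt_energy_add _ (measurable_spike τ) hF _ L hprior).trans ?_
        gcongr
        exact hQ.transcriptLaw_growth_lt_energy_le hn hk hτ hL
    _ ≤ 2 * (2 * eexp (-L)) + 2 * eexp (-L) := by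
        rw [← Finset.mul_sum]
        gcongr
        exact sum_eexp_neg_add_le L t
    _ = 6 * eexp (-L) := by ring

end QueryMaps

end EnergyGrowth

section GaussianMatrix

lemma exists_sqNorm_le_one_of_lt_specNorm_sq {m n : Type*} [Fintype m] [Fintype n]
    {A : Matrix m n ℝ} {b : ℝ} (hb₀ : 0 ≤ b) (hb : b < specNorm A ^ 2) :
    ∃ x, sqNorm x ≤ 1 ∧ b < sqNorm (A *ᵥ x) := by
  have hlt : √b < specNorm A := (Real.sqrt_lt hb₀ (specNorm_nonneg A)).2 hb
  obtain ⟨_, ⟨x, hx, rfl⟩, hlt⟩ :=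
    exists_lt_of_lt_csSup (Set.Nonempty.image _ ⟨0, by simp [sqNorm]⟩) hlt
  exact ⟨x, hx, Real.sqrt_monotone.reflect_lt hlt⟩

/-- By the parallelogram law, if `|A e|²` is large then for each `z` one of `|A (e + z)|²` and
`|A (e - z)|²` is at least as large. -/
lemma le_sqNorm_mulVec_add_or_sub {m n : Type*} [Fintype m] [Fintype n] {A : Matrix m n ℝ} {b : ℝ}
    {e : n → ℝ} (he : b < sqNorm (A *ᵥ e)) (z : n → ℝ) :
    b ≤ sqNorm (A *ᵥ (e + z)) ∨ b ≤ sqNorm (A *ᵥ (e - z)) := by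
  have hparallelogram := sqNorm_add_add_sub (A *ᵥ e) (A *ᵥ z)
  rw [← mulVec_add, ← mulVec_sub] at hparallelogram
  by_contra! hlt
  linarith [sqNorm_nonneg (A *ᵥ z)]

lemma eexp_mul_volume_closedBall_le {m n : Type*} [Fintype m] [Fintype n] {A : Matrix m n ℝ}
    {b : ℝ} (hb₀ : 0 ≤ b) (hb : b < specNorm A ^ 2) {l : ℝ} (hl : 0 ≤ l) :
    eexp (l * b) * volume (Metric.closedBall (0 : EuclideanSpace ℝ n) (1 / 2)) ≤
      2 * ∫⁻ x in Metric.closedBall (0 : EuclideanSpace ℝ n) (3 / 2),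
        eexp (l * sqNorm (A *ᵥ x.ofLp)) := by
  obtain ⟨e, he, hAe⟩ := exists_sqNorm_le_one_of_lt_specNorm_sq hb₀ hb
  let f : EuclideanSpace ℝ n → ℝ≥0∞ :=
    (Metric.closedBall 0 (3 / 2)).indicator fun x => eexp (l * sqNorm (A *ᵥ x.ofLp))
  have hf : Measurable f := Measurable.indicator (by fun_prop) measurableSet_closedBall
  let e' : EuclideanSpace ℝ n := WithLp.toLp 2 e
  have he' : ‖e'‖ ≤ 1 := by
    rwa [sqNorm_eq_norm_sq, sq_le_one_iff₀ (norm_nonneg _)] at he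
  have hpointwise (z : EuclideanSpace ℝ n) :
      (Metric.closedBall 0 (1 / 2)).indicator (fun _ => eexp (l * b)) z ≤
        f (e' + z) + f (e' - z) := by
    refine Set.indicator_apply_le' (fun hz => ?_) fun _ => zero_le
    rw [mem_closedBall_zero_iff] at hz
    have hadd : e' + z ∈ Metric.closedBall (0 : EuclideanSpace ℝ n) (3 / 2) :=
      mem_closedBall_zero_iff.2 ((norm_add_le _ _).trans (by linarith))
    have hsub : e' - z ∈ Metric.closedBall (0 : EuclideanSpace ℝ n) (3 / 2) :=
      mem_closedBall_zero_iff.2 ((norm_sub_le _ _).trans (by linarith))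
    simp only [f, Set.indicator_of_mem hadd, Set.indicator_of_mem hsub]
    rcases le_sqNorm_mulVec_add_or_sub hAe z.ofLp with hle | hle
    · exact le_add_right (eexp_le_eexp (mul_le_mul_of_nonneg_left hle hl))
    · exact le_add_left (eexp_le_eexp (mul_le_mul_of_nonneg_left hle hl))
  calc eexp (l * b) * volume (Metric.closedBall (0 : EuclideanSpace ℝ n) (1 / 2))
      = ∫⁻ z, (Metric.closedBall 0 (1 / 2)).indicator (fun _ => eexp (l * b)) z :=
        (lintegral_indicator_const measurableSet_closedBall _).symm
    _ ≤ ∫⁻ z, (f (e' + z) + f (e' - z)) := lintegral_mono hpointwise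
    _ = 2 * ∫⁻ x, f x := by
        rw [lintegral_add_left (by fun_prop), lintegral_add_left_eq_self,
          lintegral_sub_left_eq_self, two_mul]
    _ = _ := by rw [lintegral_indicator measurableSet_closedBall]

lemma sqNorm_mulVec_le_frobSq_mul {m n : Type*} [Fintype m] [Fintype n] (A : Matrix m n ℝ)
    (x : n → ℝ) : sqNorm (A *ᵥ x) ≤ frobSq A * sqNorm x := by
  rw [frobSq, Finset.sum_mul]
  exact Finset.sum_le_sum fun i _ => Finset.sum_mul_sq_le_sq_mul_sq _ (A i) x

variable {n : ℕ}

/-- The matrix with flattening `a`, the inverse of `vec`. -/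
def unvec (a : Fin (n * n) → ℝ) : Matrix (Fin n) (Fin n) ℝ :=
  of fun i j => a (finProdFinEquiv (i, j))

lemma vec_unvec (a : Fin (n * n) → ℝ) : _root_.vec n (unvec a) = a :=
  funext fun l => congrArg a (finProdFinEquiv.apply_symm_apply l)

lemma frobSq_unvec (a : Fin (n * n) → ℝ) : frobSq (unvec a) = sqNorm a := by
  rw [sqNorm, ← finProdFinEquiv.sum_comp, Fintype.sum_prod_type]
  rfl

/-- The matrix of the linear map `a ↦ unvec a *ᵥ x`. -/
def unvecMulVecMatrix (x : Fin n → ℝ) : Matrix (Fin n) (Fin (n * n)) ℝ :=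
  of fun i => tensor (Pi.single i 1) x

lemma unvecMulVecMatrix_mulVec (a : Fin (n * n) → ℝ) (x : Fin n → ℝ) :
    unvecMulVecMatrix x *ᵥ a = unvec a *ᵥ x := by
  ext i
  simp only [mulVec, dotProduct, ← finProdFinEquiv.sum_comp, Fintype.sum_prod_type]
  refine (Finset.sum_eq_single i ?_ (by simp)).trans ?_
  · intro j _ hji
    simp [unvecMulVecMatrix, tensor, _root_.vec, hji]
  · simp [unvecMulVecMatrix, unvec, tensor, _root_.vec, mul_comm]

lemma frobSq_unvecMulVecMatrix (x : Fin n → ℝ) :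
    frobSq (unvecMulVecMatrix x) = n * sqNorm x := by
  have hrow (i : Fin n) : ∑ l, unvecMulVecMatrix x i l ^ 2 = sqNorm x := by
    rw [← finProdFinEquiv.sum_comp, Fintype.sum_prod_type]
    refine (Finset.sum_eq_single i ?_ (by simp)).trans ?_
    · intro j _ hji
      simp [unvecMulVecMatrix, tensor, _root_.vec, hji]
    · simp [unvecMulVecMatrix, tensor, _root_.vec, sqNorm]
  simp [frobSq, hrow]

lemma lintegral_eexp_sqNorm_unvec_mulVec_le (x : Fin n → ℝ) {l : ℝ} (hl₀ : 0 ≤ l)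
    (hl : l * sqNorm x ≤ 1 / 4) :
    ∫⁻ a, eexp (l * sqNorm (unvec a *ᵥ x)) ∂(γ (Fin (n * n))) ≤ eexp (2 * l * (n * sqNorm x)) := by
  have hnorm : specNorm (unvecMulVecMatrix x) ^ 2 ≤ sqNorm x :=
    specNorm_sq_le (sqNorm_nonneg x) fun a => by
      rw [unvecMulVecMatrix_mulVec, mul_comm, ← frobSq_unvec]
      exact sqNorm_mulVec_le_frobSq_mul _ x
  simp only [← unvecMulVecMatrix_mulVec]
  rw [← frobSq_unvecMulVecMatrix]
  exact lintegral_eexp_sqNorm_mulVec_stdGaussian _ hl₀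
    ((mul_le_mul_of_nonneg_left hnorm hl₀).trans hl)

lemma measurable_eexp_sqNorm_unvec_mulVec (l : ℝ) :
    Measurable fun p : (Fin (n * n) → ℝ) × EuclideanSpace ℝ (Fin n) =>
      eexp (l * sqNorm (unvec p.1 *ᵥ p.2.ofLp)) := by
  unfold unvec sqNorm mulVec dotProduct
  simp only [of_apply]
  fun_prop

lemma lintegral_setLIntegral_eexp_sqNorm_unvec_mulVec_le :
    ∫⁻ a, ∫⁻ x in Metric.closedBall (0 : EuclideanSpace ℝ (Fin n)) (3 / 2),
        eexp (1 / 9 * sqNorm (unvec a *ᵥ x.ofLp)) ∂volume ∂(γ (Fin (n * n))) ≤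
      eexp (n / 2) * volume (Metric.closedBall (0 : EuclideanSpace ℝ (Fin n)) (3 / 2)) := by
  rw [lintegral_lintegral_swap (measurable_eexp_sqNorm_unvec_mulVec _).aemeasurable,
    ← setLIntegral_const]
  refine setLIntegral_mono measurable_const fun x hx => ?_
  have hx_norm : sqNorm x.ofLp ≤ (3 / 2) ^ 2 := by
    rw [sqNorm_eq_norm_sq]
    exact pow_le_pow_left₀ (norm_nonneg _) (mem_closedBall_zero_iff.1 hx) 2
  refine (lintegral_eexp_sqNorm_unvec_mulVec_le _ (by norm_num) (by linarith)).trans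
    (eexp_le_eexp ?_)
  nlinarith [n.cast_nonneg (α := ℝ)]

/-- A net argument with an integral over the ball of radius `3 / 2` in place of the union bound. -/
theorem measure_lt_specNorm_sq_unvec_le {b : ℝ} (hb : 0 ≤ b) :
    γ (Fin (n * n)) {a | b < specNorm (unvec a) ^ 2} ≤ 2 * 3 ^ n * eexp (n / 2 - b / 9) := by
  let ball (ρ : ℝ) := Metric.closedBall (0 : EuclideanSpace ℝ (Fin n)) ρ
  have hvol : volume (ball (3 / 2)) = 3 ^ n * volume (ball (1 / 2)) := by
    have hscale := Measure.addHaar_closedBall_mul_of_pos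
      (volume : Measure (EuclideanSpace ℝ (Fin n))) 0 three_pos (1 / 2)
    rw [finrank_euclideanSpace_fin, ENNReal.ofReal_pow three_pos.le, ENNReal.ofReal_ofNat] at hscale
    rw [← mul_one_div (3 : ℝ) 2]
    exact hscale
  have hmeas := (measurable_eexp_sqNorm_unvec_mulVec (n := n) (1 / 9)).lintegral_prod_right'
    (ν := volume.restrict (ball (3 / 2)))
  have hball_pos : 0 < volume (ball (1 / 2)) :=
    Metric.measure_closedBall_pos volume _ (by norm_num)
  refine (ENNReal.mul_le_mul_iff_right (mul_ne_zero (eexp_pos (1 / 9 * b)).ne' hball_pos.ne')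
    (ENNReal.mul_ne_top (eexp_ne_top _) measure_closedBall_lt_top.ne)).1 ?_
  calc eexp (1 / 9 * b) * volume (ball (1 / 2)) *
        γ (Fin (n * n)) {a | b < specNorm (unvec a) ^ 2}
      ≤ ∫⁻ a, 2 * ∫⁻ x in ball (3 / 2), eexp (1 / 9 * sqNorm (unvec a *ᵥ x.ofLp))
          ∂volume ∂(γ (Fin (n * n))) := by
        refine (mul_le_mul_right (measure_mono fun a ha => ?_) _).trans
          (mul_meas_ge_le_lintegral (hmeas.const_mul 2) _)
        exact eexp_mul_volume_closedBall_le hb ha (by norm_num)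
    _ ≤ 2 * (eexp (n / 2) * volume (ball (3 / 2))) := by
        rw [lintegral_const_mul _ hmeas]
        gcongr
        exact lintegral_setLIntegral_eexp_sqNorm_unvec_mulVec_le
    _ = eexp (1 / 9 * b) * volume (ball (1 / 2)) * (2 * 3 ^ n * eexp (n / 2 - b / 9)) := by
        have hsplit : (n / 2 : ℝ) = 1 / 9 * b + (n / 2 - b / 9) := by ring
        rw [hvol, hsplit, eexp_add]
        ring_nf

lemma measure_lt_specNorm_sq_unvec_le_fourth (hn : 0 < n) :
    γ (Fin (n * n)) {a | 108 * (n : ℝ) < specNorm (unvec a) ^ 2} ≤ 1 / 4 := by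
  have hn' : (1 : ℝ) ≤ n := mod_cast hn
  have hthree : (3 : ℝ≥0∞) ^ n ≤ eexp (2 * n) := by
    rw [mul_comm, eexp, Real.exp_nat_mul, ENNReal.ofReal_pow (Real.exp_pos _).le]
    gcongr
    exact (by norm_num : (3 : ℝ≥0∞) ≤ ENNReal.ofReal (2 + 1)).trans (ofReal_add_one_le_eexp 2)
  have height : (8 : ℝ≥0∞) ≤ eexp (9 * n) := by
    refine le_trans ?_ (ofReal_add_one_le_eexp _)
    rw [← ENNReal.ofReal_ofNat]
    gcongr
    linarith
  calc γ (Fin (n * n)) {a | 108 * (n : ℝ) < specNorm (unvec a) ^ 2}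
      ≤ 2 * 3 ^ n * eexp (n / 2 - 108 * n / 9) := measure_lt_specNorm_sq_unvec_le (by positivity)
    _ ≤ 2 * eexp (2 * n) * eexp (n / 2 - 108 * n / 9) := by gcongr
    _ ≤ 2 * eexp (-(9 * n)) := by
        rw [mul_assoc, ← eexp_add]
        gcongr
        linarith
    _ ≤ 1 / 4 := by
        rw [ENNReal.le_div_iff_mul_le (by simp) (by simp), mul_right_comm,
          ← eexp_mul_eexp_neg (9 * n)]
        norm_num
        gcongr

end GaussianMatrix

section CorrectOutputs

/-- The correctness requirement on the output `B` for the input `A`: a rank-`r` approximation in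
spectral norm, optimal up to the factor `α`. -/
def IsLowRankApprox {m n : Type*} [Fintype m] [Fintype n] (α : ℝ) (r : ℕ) (A B : Matrix m n ℝ) :
    Prop :=
  B.rank ≤ r ∧ specNorm (A - B) ≤ α * singVal A (r + 1)

/-- The matrices of rank about at most `r` and squared spectral norm at most `b` that map `v` to a
vector of almost maximal length. Correct outputs on inputs planted in direction `v` are of this
kind. The rank enters through the Frobenius norm only, which makes the set measurable. -/
def alignedSet {m n : Type*} [Fintype m] [Fintype n] (r : ℕ) (b : ℝ) (v : n → ℝ) :
    Set (Matrix m n ℝ) :=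
  {B | frobSq B ≤ r * b ∧ specNorm B ^ 2 ≤ b ∧ Fintype.card n * b / 9 ≤ sqNorm (B *ᵥ v)}

variable {m n : Type*} [Fintype m] [Fintype n]

lemma singVal_succ_le (A : Matrix m n ℝ) {X : Matrix m n ℝ} {r : ℕ} (hX : X.rank ≤ r) :
    singVal A (r + 1) ≤ specNorm (A - X) := by
  refine csInf_le ⟨0, ?_⟩ ⟨X, by simpa using hX, rfl⟩
  rintro _ ⟨Y, -, rfl⟩
  exact specNorm_nonneg _

lemma IsLowRankApprox.specNorm_sub_le {α : ℝ} {r : ℕ} {A B : Matrix m n ℝ}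
    (h : IsLowRankApprox α r A B) (hα : 0 ≤ α) {X : Matrix m n ℝ} (hX : X.rank ≤ r) :
    specNorm (B - X) ≤ (1 + α) * specNorm (A - X) :=
  calc specNorm (B - X) = specNorm ((B - A) + (A - X)) := by rw [sub_add_sub_cancel]
    _ ≤ specNorm (A - B) + specNorm (A - X) :=
        (specNorm_add_le _ _).trans_eq (by rw [specNorm_sub_rev])
    _ ≤ α * specNorm (A - X) + specNorm (A - X) := by
        gcongr
        exact h.2.trans (mul_le_mul_of_nonneg_left (singVal_succ_le A hX) hα)
    _ = (1 + α) * specNorm (A - X) := by ring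

lemma IsLowRankApprox.eq_of_rank_le {α : ℝ} {r : ℕ} {A B : Matrix m n ℝ}
    (h : IsLowRankApprox α r A B) (hα : 0 ≤ α) (hA : A.rank ≤ r) : B = A := by
  have hspec : specNorm (B - A) ≤ 0 := by
    simpa [specNorm_eq_zero.2 rfl] using h.specNorm_sub_le hα hA
  exact sub_eq_zero.1 (specNorm_eq_zero.1 (hspec.antisymm (specNorm_nonneg _)))

lemma measurableSet_mem_alignedSet {X : Type*} [MeasurableSpace X] (r : ℕ) (b : ℝ)
    {f : X → Matrix m n ℝ} {v : X → n → ℝ} (hf : ∀ i j, Measurable fun x => f x i j)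
    (hv : Measurable v) : MeasurableSet {x | f x ∈ alignedSet r b (v x)} := by
  have hfrob : MeasurableSet {x | frobSq (f x) ≤ r * b} :=
    measurableSet_le (Finset.measurable_fun_sum _ fun i _ =>
      Finset.measurable_fun_sum _ fun j _ => (hf i j).pow_const 2) measurable_const
  have hspec : MeasurableSet {x | specNorm (f x) ^ 2 ≤ b} :=
    measurableSet_le ((measurable_specNorm_comp hf).pow_const 2) measurable_const
  have hmulVec : MeasurableSet {x | Fintype.card n * b / 9 ≤ sqNorm (f x *ᵥ v x)} :=
    measurableSet_le measurable_const (measurable_sqNorm.comp (measurable_mulVec hf hv))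
  exact hfrob.inter (hspec.inter hmulVec)

lemma signs_mem_alignedSet_le (r : ℕ) {b : ℝ} (hb : 0 < b) (B : Matrix m n ℝ) :
    signs n {v | B ∈ alignedSet r b v} ≤ eexp (r / 2 - Fintype.card n / 36) := by
  by_cases hB : frobSq B ≤ r * b ∧ specNorm B ^ 2 ≤ b
  · have hquad : ∫⁻ v, eexp (1 / (4 * b) * sqNorm (B *ᵥ v)) ∂(signs n) ≤ eexp (r / 2) := by
      refine (isSubgaussian_signs.lintegral_eexp_sqNorm_mulVec_le B (by positivity) ?_).trans
        (eexp_le_eexp ?_)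
      · calc 1 / (4 * b) * specNorm B ^ 2 ≤ 1 / (4 * b) * b := by gcongr; exact hB.2
          _ = 1 / 4 := by field_simp
      · calc 2 * (1 / (4 * b)) * frobSq B ≤ 2 * (1 / (4 * b)) * (r * b) := by gcongr; exact hB.1
          _ = r / 2 := by field_simp; norm_num
    have hmono (v : n → ℝ) (hv : B ∈ alignedSet r b v) :
        (Fintype.card n / 36 : ℝ) ≤ 1 / (4 * b) * sqNorm (B *ᵥ v) :=
      calc (Fintype.card n / 36 : ℝ) = 1 / (4 * b) * (Fintype.card n * b / 9) := by
            field_simp; ring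
        _ ≤ 1 / (4 * b) * sqNorm (B *ᵥ v) := by gcongr; exact hv.2.2
    rw [sub_eq_neg_add, eexp_add]
    refine (measure_mono hmono).trans <|
      (measure_le_le_lintegral_eexp _ (by fun_prop) _).trans ?_
    gcongr
  · have hempty : {v : n → ℝ | B ∈ alignedSet r b v} = ∅ :=
      Set.eq_empty_of_forall_notMem fun v hv => hB ⟨hv.1, hv.2.1⟩
    rw [hempty, measure_empty]
    exact zero_le

lemma mem_alignedSet_of_specNorm_sub_le {r : ℕ} {β : ℝ} {v : n → ℝ} {B X : Matrix m n ℝ}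
    (hB : B.rank ≤ r) (hX : specNorm X ≤ β) (hv : sqNorm v = Fintype.card n)
    (hXv : sqNorm (X *ᵥ v) = Fintype.card n * β ^ 2) (hBX : specNorm (B - X) ≤ β / 2) :
    B ∈ alignedSet r (9 / 4 * β ^ 2) v := by
  have hB_norm : specNorm B ^ 2 ≤ 9 / 4 * β ^ 2 :=
    calc specNorm B ^ 2 = specNorm ((B - X) + X) ^ 2 := by rw [sub_add_cancel]
      _ ≤ (β / 2 + β) ^ 2 :=
          pow_le_pow_left₀ (specNorm_nonneg _) ((specNorm_add_le _ _).trans (by gcongr)) 2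
      _ = 9 / 4 * β ^ 2 := by ring
  have hBXv : sqNorm ((B - X) *ᵥ v) ≤ (β / 2) ^ 2 * Fintype.card n :=
    (sqNorm_mulVec_le _ v).trans <| by
      rw [hv]
      gcongr
      exact specNorm_nonneg _
  refine ⟨(frobSq_le_rank_mul B).trans (by gcongr), hB_norm, ?_⟩
  have htriangle := sqNorm_add_le (B *ᵥ v) ((X - B) *ᵥ v)
  rw [← add_mulVec, add_sub_cancel, hXv, ← neg_sub B X, neg_mulVec, ← neg_one_smul ℝ, sqNorm_smul]
    at htriangle
  linarith

lemma sqNorm_vecMulVec_mulVec (u : m → ℝ) (v x : n → ℝ) :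
    sqNorm (vecMulVec u v *ᵥ x) = (v ⬝ᵥ x) ^ 2 * sqNorm u := by
  rw [vecMulVec_mulVec, op_smul_eq_smul, sqNorm_smul]

lemma specNorm_vecMulVec_sq_le (u : m → ℝ) (v : n → ℝ) :
    specNorm (vecMulVec u v) ^ 2 ≤ sqNorm u * sqNorm v :=
  specNorm_sq_le (mul_nonneg (sqNorm_nonneg u) (sqNorm_nonneg v)) fun x => by
    rw [sqNorm_vecMulVec_mulVec, mul_comm, mul_assoc]
    exact mul_le_mul_of_nonneg_left (Finset.sum_mul_sq_le_sq_mul_sq _ v x) (sqNorm_nonneg u)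

end CorrectOutputs

section PlantedOutputs

variable {n : ℕ}

lemma unvec_spike (τ : ℝ) (z : (Fin n → ℝ) × (Fin n → ℝ)) :
    unvec (spike τ z) = vecMulVec ((τ / √n) • z.1) z.2 := by
  ext i j
  simp [unvec, spike, tensor, _root_.vec, vecMulVec_apply, mul_assoc]

/-- The plant has rank one, so the optimal error is at most `‖G‖` and the output differs from the
plant by at most `(1 + α) ‖G‖`, half the norm of the plant. -/
theorem IsLowRankApprox.mem_alignedSet {r : ℕ} {α τ : ℝ} {a : Fin (n * n) → ℝ}
    {z : (Fin n → ℝ) × (Fin n → ℝ)} {B : Matrix (Fin n) (Fin n) ℝ}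
    (h : IsLowRankApprox α r (unvec (a + spike τ z)) B) (hn : 0 < n) (hr : 1 ≤ r) (hα : 0 ≤ α)
    (hτ : 24 * (1 + α) ≤ τ) (hu : sqNorm z.1 = n) (hv : sqNorm z.2 = n)
    (ha : specNorm (unvec a) ^ 2 ≤ 108 * n) :
    B ∈ alignedSet r (9 / 4 * (τ * √n) ^ 2) z.2 := by
  have hτ₀ : 0 ≤ τ := by linarith
  have hunvec : unvec (a + spike τ z) - unvec (spike τ z) = unvec a := add_sub_cancel_right _ _
  have hn' : (0 : ℝ) < n := by exact_mod_cast hn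
  have ha' : specNorm (unvec a) ≤ 12 * √n := by
    refine abs_le_of_sq_le_sq' (ha.trans ?_) (by positivity) |>.2
    rw [mul_pow, Real.sq_sqrt n.cast_nonneg]
    linarith
  have hu' : sqNorm ((τ / √n) • z.1) = τ ^ 2 := by
    rw [sqNorm_smul, hu, div_pow, Real.sq_sqrt n.cast_nonneg, div_mul_cancel₀ _ hn'.ne']
  refine mem_alignedSet_of_specNorm_sub_le h.1 (X := unvec (spike τ z)) ?_ ?_ ?_ ?_
  · refine abs_le_of_sq_le_sq' ?_ (by positivity) |>.2
    rw [unvec_spike, mul_pow, Real.sq_sqrt n.cast_nonneg, ← hu', ← hv]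
    exact specNorm_vecMulVec_sq_le _ _
  · rw [hv, Fintype.card_fin]
  · rw [unvec_spike, sqNorm_vecMulVec_mulVec, hu', ← sqNorm_eq_dotProduct, hv, Fintype.card_fin,
      mul_pow, Real.sq_sqrt n.cast_nonneg]
    ring
  · calc specNorm (B - unvec (spike τ z))
        ≤ (1 + α) * specNorm (unvec a) := by
          rw [← hunvec]
          refine h.specNorm_sub_le hα (le_trans ?_ hr)
          rw [unvec_spike]
          exact rank_vecMulVec_le _ _
      _ ≤ (1 + α) * (12 * √n) := by gcongr
      _ ≤ τ * √n / 2 := by nlinarith [Real.sqrt_nonneg (n : ℝ)]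

end PlantedOutputs

/-- A randomized `t`-round algorithm, with seed `ω ∼ μ` and `k` measurements per round, that for
every input matrix outputs a rank-`r` approximation optimal up to the factor `α` with probability at
least `p`. -/
structure RandomizedLRA {Ω : Type*} [MeasurableSpace Ω] (μ : Measure Ω) (n r k t : ℕ) (α p : ℝ)
    where
  queries : Ω → QueryMaps (n * n) k t
  output : Ω → (Fin t → Fin k → ℝ) → Matrix (Fin n) (Fin n) ℝ
  valid : ∀ ω, (queries ω).Valid
  measurable_queries : ∀ (j : Fin t) (i : Fin k) (l : Fin (n * n)),
    Measurable fun z : Ω × (Fin (j : ℕ) → Fin k → ℝ) => queries z.1 j z.2 i l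
  measurable_output : ∀ i j : Fin n,
    Measurable fun z : Ω × (Fin t → Fin k → ℝ) => output z.1 z.2 i j
  success : ∀ A : Matrix (Fin n) (Fin n) ℝ, ENNReal.ofReal p ≤
    μ {ω | IsLowRankApprox α r A (output ω (QueryMaps.resp (queries ω) (_root_.vec n A)))}

namespace RandomizedLRA

variable {Ω : Type*} [MeasurableSpace Ω] {μ : Measure Ω} {n r k t : ℕ} {α p : ℝ}

lemma one_le_rounds [IsProbabilityMeasure μ] (alg : RandomizedLRA μ n r k t α p) (hα : 0 ≤ α)
    (hp : 0 < p) (hn : 0 < n) (hr : 1 ≤ r) : 1 ≤ t := by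
  refine Nat.one_le_iff_ne_zero.2 ?_
  rintro rfl
  -- Without measurements the output depends on the seed only, yet it must recover every rank-one
  -- matrix exactly with probability at least `p`.
  let i₀ : Fin n := ⟨0, hn⟩
  let entry (ω : Ω) : ℝ := alg.output ω 0 i₀ i₀
  have hentry : Measurable entry :=
    (alg.measurable_output i₀ i₀).comp (measurable_id.prodMk measurable_const)
  have hmass (x : ℝ) : ENNReal.ofReal p ≤ μ.map entry {x} := by
    rw [Measure.map_apply hentry (measurableSet_singleton x)]
    refine (alg.success (vecMulVec (fun _ => x) 1)).trans (measure_mono fun ω hω => ?_)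
    have hA := IsLowRankApprox.eq_of_rank_le hω hα ((rank_vecMulVec_le _ _).trans hr)
    rw [Subsingleton.elim (QueryMaps.resp _ _) 0] at hA
    exact (congrFun₂ hA i₀ i₀).trans (mul_one x)
  have := Measure.isProbabilityMeasure_map (μ := μ) hentry.aemeasurable
  exact measure_ne_top (μ.map entry) Set.univ <| Set.infinite_univ.meas_eq_top
    ⟨_, (ENNReal.ofReal_pos.2 hp).ne', fun x _ => hmass x⟩

/-- The event that the output on the planted Gaussian input reveals the direction `v` of the
spike. -/
def alignedEvent (alg : RandomizedLRA μ n r k t α p) (τ : ℝ) :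
    Set (Ω × ((Fin n → ℝ) × (Fin n → ℝ)) × (Fin (n * n) → ℝ)) :=
  {w | alg.output w.1 (QueryMaps.resp (alg.queries w.1) (w.2.2 + spike τ w.2.1)) ∈
    alignedSet r (9 / 4 * (τ * √n) ^ 2) w.2.1.2}

lemma measurableSet_alignedEvent (alg : RandomizedLRA μ n r k t α p) (τ : ℝ) :
    MeasurableSet (alg.alignedEvent τ) := by
  have hinput : Measurable fun w : Ω × ((Fin n → ℝ) × (Fin n → ℝ)) × (Fin (n * n) → ℝ) =>
      (w.1, w.2.2 + spike τ w.2.1) :=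
    measurable_fst.prodMk ((measurable_snd.comp measurable_snd).add
      ((measurable_spike τ).comp (measurable_fst.comp measurable_snd)))
  have hresp := (QueryMaps.measurable_resp alg.measurable_queries).comp hinput
  exact measurableSet_mem_alignedSet r _
    (fun i j => (alg.measurable_output i j).comp (measurable_fst.prodMk hresp)) (by fun_prop)

lemma mul_three_fourths_le_alignedEvent [SFinite μ] (alg : RandomizedLRA μ n r k t α p) (hα : 0 ≤ α)
    (hn : 0 < n) (hr : 1 ≤ r) {τ : ℝ} (hτ : 24 * (1 + α) ≤ τ) :
    ENNReal.ofReal p * (3 / 4) ≤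
      μ.prod ((signPairs n).prod (γ (Fin (n * n)))) (alg.alignedEvent τ) := by
  have hsigns : signs (Fin n) {u | sqNorm u = n} = 1 := by
    refine (measure_congr (Filter.eventuallyEq_univ.2 ?_)).trans measure_univ
    simpa using! sqNorm_eq_card_ae_signs (ι := Fin n)
  have hgaussian : 3 / 4 ≤ γ (Fin (n * n)) {a | specNorm (unvec a) ^ 2 ≤ 108 * n} := by
    have hmeas : MeasurableSet {a : Fin (n * n) → ℝ | 108 * (n : ℝ) < specNorm (unvec a) ^ 2} :=
      measurableSet_lt measurable_const <|
        (measurable_specNorm_comp fun _ _ => measurable_pi_apply _).pow_const 2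
    have hcompl := prob_compl_eq_one_sub (μ := γ (Fin (n * n))) hmeas
    simp only [Set.compl_ofPred, not_lt] at hcompl
    rw [hcompl]
    refine le_trans ?_ (tsub_le_tsub_left (measure_lt_specNorm_sq_unvec_le_fourth hn) 1)
    refine ENNReal.le_sub_of_add_le_right (by norm_num) ?_
    rw [← ENNReal.add_div]
    norm_num
  let typical : Set (((Fin n → ℝ) × (Fin n → ℝ)) × (Fin (n * n) → ℝ)) :=
    ({u | sqNorm u = n} ×ˢ {v | sqNorm v = n}) ×ˢ {a | specNorm (unvec a) ^ 2 ≤ 108 * n}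
  have htypical : 3 / 4 ≤ (signPairs n).prod (γ (Fin (n * n))) typical := by
    rwa [Measure.prod_prod, signPairs, Measure.prod_prod, hsigns, one_mul, one_mul]
  have hsuccess : ∀ y ∈ typical,
      ENNReal.ofReal p ≤ μ ((fun ω => (ω, y)) ⁻¹' alg.alignedEvent τ) := by
    rintro ⟨z, a⟩ ⟨⟨hu, hv⟩, ha⟩
    refine (alg.success (unvec (a + spike τ z))).trans (measure_mono fun ω hω => ?_)
    rw [Set.mem_ofPred_eq, vec_unvec] at hω
    exact hω.mem_alignedSet hn hr hα hτ hu hv ha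
  rw [Measure.prod_apply_symm (alg.measurableSet_alignedEvent τ)]
  calc ENNReal.ofReal p * (3 / 4)
      ≤ ENNReal.ofReal p * (signPairs n).prod (γ (Fin (n * n)))
          {y | ENNReal.ofReal p ≤ μ ((fun ω => (ω, y)) ⁻¹' alg.alignedEvent τ)} := by
        gcongr
        exact htypical.trans (measure_mono hsuccess)
    _ ≤ _ := mul_meas_ge_le_lintegral
        (measurable_measure_prodMk_right (alg.measurableSet_alignedEvent τ)) _

lemma alignedEvent_le [IsProbabilityMeasure μ] (alg : RandomizedLRA μ n r k t α p) (hn : 0 < n)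
    (hk : n ≤ k) {τ L : ℝ} (hτ : 1 ≤ τ) (hL : 0 ≤ L)
    (hgrowth : growth τ L ^ t * (k / n) + 2 * L + r / 2 ≤ n / 36) :
    μ.prod ((signPairs n).prod (γ (Fin (n * n)))) (alg.alignedEvent τ) ≤ 6 * eexp (-L) := by
  have hseed (ω : Ω) : (signPairs n).prod (γ (Fin (n * n))) (Prod.mk ω ⁻¹' alg.alignedEvent τ) ≤
      6 * eexp (-L) := by
    let F : Set (((Fin n → ℝ) × (Fin n → ℝ)) × (Fin t → Fin k → ℝ)) :=
      {y | alg.output ω y.2 ∈ alignedSet r (9 / 4 * (τ * √n) ^ 2) y.1.2}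
    have hF : MeasurableSet F := measurableSet_mem_alignedSet r _
      (fun i j => (alg.measurable_output i j).comp (measurable_const.prodMk measurable_snd))
      (by fun_prop)
    have hF_le := (alg.valid ω).transcriptLaw_le hn hk hτ hL hF fun h => ?_
    · rwa [QueryMaps.transcriptLaw, Measure.map_apply
        ((alg.valid ω).measurable_transcript (measurable_spike τ)) hF] at hF_le
    calc signPairs n {z | alg.output ω h ∈ alignedSet r (9 / 4 * (τ * √n) ^ 2) z.2}
        ≤ signs (Fin n) {v | alg.output ω h ∈ alignedSet r (9 / 4 * (τ * √n) ^ 2) v} :=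
          (measurePreserving_snd.measure_preimage_le _)
      _ ≤ eexp (r / 2 - n / 36) := by
          simpa using signs_mem_alignedSet_le r (by positivity) (alg.output ω h)
      _ ≤ eexp (-(growth τ L ^ t * (k / n) + 2 * L)) := eexp_le_eexp (by linarith)
  calc μ.prod ((signPairs n).prod (γ (Fin (n * n)))) (alg.alignedEvent τ)
      = ∫⁻ ω, (signPairs n).prod (γ (Fin (n * n))) (Prod.mk ω ⁻¹' alg.alignedEvent τ) ∂μ :=
        Measure.prod_apply (alg.measurableSet_alignedEvent τ)
    _ ≤ ∫⁻ _, 6 * eexp (-L) ∂μ := lintegral_mono hseed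
    _ = 6 * eexp (-L) := by simp

theorem lt_growth [IsProbabilityMeasure μ] (alg : RandomizedLRA μ n r k t α p) (hα : 0 ≤ α)
    (hp : 0 < p) (hn : 0 < n) (hr : 1 ≤ r) (hk : n ≤ k) :
    (n / 36 : ℝ) < growth (24 * (1 + α)) (8 / p) ^ t * (k / n) + 2 * (8 / p) + r / 2 := by
  by_contra! hgrowth
  have hupper := alg.alignedEvent_le hn hk (by linarith) (by positivity) hgrowth
  have hlower := alg.mul_three_fourths_le_alignedEvent hα hn hr le_rfl
  refine (hlower.trans hupper).not_gt ?_
  calc 6 * eexp (-(8 / p)) < 6 * ENNReal.ofReal (p / 8) := by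
        rw [← inv_div]
        exact ENNReal.mul_lt_mul_right (by norm_num) (by norm_num) (eexp_neg_inv_lt (by positivity))
    _ = ENNReal.ofReal p * (3 / 4) := by
        rw [← ENNReal.ofReal_ofNat 6, ← ENNReal.ofReal_ofNat 3, ← ENNReal.ofReal_ofNat 4,
          ← ENNReal.ofReal_div_of_pos four_pos, ← ENNReal.ofReal_mul hp.le,
          ← ENNReal.ofReal_mul (by norm_num)]
        ring_nf

end RandomizedLRA

lemma sq_div_le_pow_of_lt {n r k t : ℕ} {g L : ℝ} (hn : 0 < n) (hr : 1 ≤ r) (hk : n * r ≤ k)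
    (ht : 1 ≤ t) (hL : 0 ≤ L) (hg : 18432 * (1 + L) ≤ g)
    (h : (n / 36 : ℝ) < g ^ t * (k / n) + 2 * L + r / 2) : (n : ℝ) ^ 2 / k ≤ g ^ (2 * t) := by
  by_contra! hx
  have hn' : (0 : ℝ) < n := mod_cast hn
  have hnr : (n * r : ℝ) ≤ k := mod_cast hk
  have hr' : (1 : ℝ) ≤ r := mod_cast hr
  have hnk : (n : ℝ) ≤ k := by nlinarith
  have hg₁ : 1 ≤ g := by linarith
  have hgt : g ≤ g ^ t := le_self_pow₀ hg₁ (by omega)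
  have hgtk : g ^ t * (g ^ t * k) < n ^ 2 := by
    rwa [lt_div_iff₀ (hn'.trans_le hnk), two_mul, pow_add, mul_assoc] at hx
  have hpow : g ^ t * (k / n) ≤ n / 18432 := by
    rw [← mul_div_assoc, div_le_iff₀ hn']
    nlinarith
  have hrank : (r : ℝ) ≤ g ^ t * (k / n) := by
    calc (r : ℝ) ≤ k / n := by rw [le_div_iff₀ hn']; linarith
      _ ≤ g ^ t * (k / n) := le_mul_of_one_le_left (by positivity) (hg₁.trans hgt)
  have hL_le : L ≤ n / 18432 := by
    have hn_le : (n : ℝ) ≤ g ^ t * k := by nlinarith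
    have hgn : g ^ t ≤ n := by nlinarith
    linarith
  linarith

lemma half_le_one_sub_ofReal_rpow_neg_one {n : ℕ} (hn : 2 ≤ n) :
    ENNReal.ofReal (1 / 2) ≤ 1 - ENNReal.ofReal ((n : ℝ) ^ (-1 : ℝ)) := by
  rw [← ENNReal.ofReal_one, ← ENNReal.ofReal_sub _ (by positivity), Real.rpow_neg_one]
  refine ENNReal.ofReal_le_ofReal ?_
  have hinv : (n : ℝ)⁻¹ ≤ 2⁻¹ := inv_anti₀ two_pos (mod_cast hn)
  linarith

theorem spectral_LRA_high_prob_round_lower_bound_general {α p : ℝ} (hα : 0 ≤ α) (hp : 0 < p) :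
    ∃ c : ℝ, 0 < c ∧ ∀ (n r k t : ℕ), 0 < n → 1 ≤ r → n * r ≤ k →
      ∀ (Ω : Type*) [MeasurableSpace Ω] (μ : Measure Ω) [IsProbabilityMeasure μ],
        RandomizedLRA μ n r k t α p → c * Real.log ((n : ℝ) ^ 2 / k) ≤ t := by
  have hL : 0 ≤ 8 / p := by positivity
  have hg : 18432 * (1 + 8 / p) ≤ growth (24 * (1 + α)) (8 / p) := by
    unfold growth
    nlinarith [one_le_pow₀ (show 1 ≤ 1 + α by linarith) (n := 2)]
  set g := growth (24 * (1 + α)) (8 / p)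
  have hlog : 0 < Real.log g := Real.log_pos (by linarith)
  refine ⟨1 / (2 * Real.log g), by positivity, fun n r k t hn hr hk Ω _ μ _ alg => ?_⟩
  have hnk := (Nat.le_mul_of_pos_right _ hr).trans hk
  have hx := sq_div_le_pow_of_lt hn hr hk (alg.one_le_rounds hα hp hn hr) hL hg
    (alg.lt_growth hα hp hn hr hnk)
  have hpos : 0 < (n : ℝ) ^ 2 / k := by
    have : 0 < k := hn.trans_le hnk
    positivity
  calc 1 / (2 * Real.log g) * Real.log ((n : ℝ) ^ 2 / k)
      ≤ 1 / (2 * Real.log g) * Real.log (g ^ (2 * t)) := by gcongr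
    _ = t := by
        rw [Real.log_pow]
        push_cast
        field_simp

/-- Round lower bound for 2-approximate spectral norm low-rank approximation
with high success probability. -/
theorem spectral_LRA_high_prob_round_lower_bound :
    ∃ (c C : ℝ) (n₀ : ℕ), 0 < c ∧ 0 < C ∧
      ∀ (n r k t : ℕ), n₀ ≤ n → 1 ≤ r → n * r ≤ k → k ≤ n ^ 2 →
      ∀ (Ω : Type) [MeasurableSpace Ω] (μ : Measure Ω) [IsProbabilityMeasure μ]
        (Qf : Ω → QueryMaps (n * n) k t)
        (out : Ω → (Fin t → Fin k → ℝ) → Matrix (Fin n) (Fin n) ℝ),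
        (∀ ω, (Qf ω).Valid) →
        (∀ (j : Fin t) (i : Fin k) (l : Fin (n * n)),
            Measurable fun p : Ω × (Fin (j : ℕ) → Fin k → ℝ) => Qf p.1 j p.2 i l) →
        (∀ i j : Fin n,
            Measurable fun p : Ω × (Fin t → Fin k → ℝ) => out p.1 p.2 i j) →
        (∀ A : Matrix (Fin n) (Fin n) ℝ,
            1 - ENNReal.ofReal ((n : ℝ) ^ (-C)) ≤
              μ {ω | (out ω (QueryMaps.resp (Qf ω) (vec n A))).rank ≤ r ∧
                    specNorm (A - out ω (QueryMaps.resp (Qf ω) (vec n A)))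
                      ≤ 2 * singVal A (r + 1)}) →
        c * Real.log ((n : ℝ) ^ 2 / k) ≤ (t : ℝ) := by
  obtain ⟨c, hc, hbound⟩ := spectral_LRA_high_prob_round_lower_bound_general
    (α := 2) (p := 1 / 2) (by norm_num) (by norm_num)
  refine ⟨c, 1, 2, hc, one_pos, fun n r k t hn hr hk _ Ω _ μ _ Qf out hV hQ hout hsucc => ?_⟩
  exact hbound n r k t (by omega) hr hk Ω μ ⟨Qf, out, hV, hQ, hout, fun A =>
    (half_le_one_sub_ofReal_rpow_neg_one hn).trans (hsucc A)⟩

end
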